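/- Let P be the Borel probability measure on ℝ with density f given by f(x) = 1/2 for x ∈ [0, 1/2] ∪ [1, 3/2], f(x) = 1 for x ∈ (1/2, 1), and f(x) = 0 otherwise. Let n ≥ 4 be an even positive integer and let α_n be an optimal set of n-means for P with card(α_n ∩ [0, 1/2]) = k and card(α_n ∩ (1/2, 3/4)) = m for positive integers k and m. Then for every optimal set α_{n+2} of (n + 2)-means for P, either card(α_{n+2} ∩ [0, 1/2]) = k + 1 and card(α_{n+2} ∩ (1/2, 3/4)) = m, or card(α_{n+2} ∩ [0, 1/2]) = k and card(α_{n+2} ∩ (1/2, 3/4)) = m + 1. -/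

import Mathlib

open MeasureTheory Set

/-- Distortion error of a set `α` with respect to the measure `Q`. -/
noncomputable def distortion (Q : Measure ℝ) (α : Set ℝ) : ℝ :=
  ∫ x, sInf ((fun a => (x - a) ^ 2) '' α) ∂Q

/-- The `n`-th quantization error of the measure `Q`. -/
noncomputable def quantErr (Q : Measure ℝ) (n : ℕ) : ℝ :=
  sInf { v : ℝ | ∃ α : Set ℝ, α.Finite ∧ α.Nonempty ∧ α.ncard ≤ n ∧ v = distortion Q α }

/-- `α` is an optimal set of `n`-means for `Q`. -/
def IsOptimal (Q : Measure ℝ) (n : ℕ) (α : Set ℝ) : Prop :=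
  α.Finite ∧ 1 ≤ α.ncard ∧ α.ncard ≤ n ∧ distortion Q α = quantErr Q n

/-- The density of the mixed distribution `P = (1/2) P₁ + (1/2) P₂`. -/
noncomputable def f2 (x : ℝ) : ℝ :=
  if x ∈ Icc (0 : ℝ) (1 / 2) ∪ Icc (1 : ℝ) (3 / 2) then 1 / 2
  else if x ∈ Ioo (1 / 2 : ℝ) 1 then 1
  else 0

/-- The mixed distribution `P = (1/2) P₁ + (1/2) P₂`. -/
noncomputable def P2 : Measure ℝ :=
  volume.withDensity fun x => ENNReal.ofReal (f2 x)

theorem f2_measurable : Measurable f2 := by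
  unfold f2
  refine Measurable.ite (measurableSet_Icc.union measurableSet_Icc) measurable_const ?_
  exact Measurable.ite measurableSet_Ioo measurable_const measurable_const

theorem f2_nonneg (x : ℝ) : 0 ≤ f2 x := by
  unfold f2; split_ifs <;> norm_num

theorem f2_le_one (x : ℝ) : f2 x ≤ 1 := by
  unfold f2; split_ifs <;> norm_num

theorem f2_left {x : ℝ} (h0 : 0 ≤ x) (h1 : x ≤ 1/2) : f2 x = 1/2 := by
  unfold f2; rw [if_pos]; left; exact ⟨h0, h1⟩

theorem f2_right {x : ℝ} (h0 : 1 ≤ x) (h1 : x ≤ 3/2) : f2 x = 1/2 := by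
  unfold f2; rw [if_pos]; right; exact ⟨h0, h1⟩

theorem f2_mid {x : ℝ} (h0 : 1/2 < x) (h1 : x < 1) : f2 x = 1 := by
  unfold f2; rw [if_neg, if_pos ⟨h0, h1⟩]
  rintro (h | h)
  · exact absurd h.2 (not_le.mpr h0)
  · exact absurd h.1 (not_le.mpr h1)

theorem f2_pos {x : ℝ} (h0 : 0 ≤ x) (h1 : x ≤ 3/2) : 0 < f2 x := by
  rcases le_or_gt x (1/2) with h | h
  · rw [f2_left h0 h]; norm_num
  · rcases lt_or_ge x 1 with h' | h'
    · rw [f2_mid h h']; norm_num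
    · rw [f2_right h' h1]; norm_num

theorem f2_refl (x : ℝ) : f2 (3/2 - x) = f2 x := by
  have e : (3/2 - x ∈ Icc (0 : ℝ) (1 / 2) ∪ Icc (1 : ℝ) (3 / 2)) ↔
      (x ∈ Icc (0 : ℝ) (1 / 2) ∪ Icc (1 : ℝ) (3 / 2)) := by
    simp only [mem_union, mem_Icc]
    constructor <;> (rintro (⟨h, h'⟩ | ⟨h, h'⟩)) <;>
      first
      | (left; constructor <;> linarith)
      | (right; constructor <;> linarith)
  have e2 : (3/2 - x ∈ Ioo (1 / 2 : ℝ) 1) ↔ (x ∈ Ioo (1 / 2 : ℝ) 1) := by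
    simp only [mem_Ioo]
    constructor <;> rintro ⟨h, h'⟩ <;> constructor <;> linarith
  unfold f2
  simp only [e, e2]

theorem ii_mul {g : ℝ → ℝ} (hg : Continuous g) (a b : ℝ) :
    IntervalIntegrable (fun x => g x * f2 x) volume a b := by
  have h1 : IntervalIntegrable f2 volume a b := by
    apply (intervalIntegrable_const (c := (1:ℝ)) (a := a) (b := b) (μ := volume)).mono_fun
    · exact f2_measurable.aestronglyMeasurable
    · filter_upwards with x
      rw [Real.norm_of_nonneg (f2_nonneg x)]; simpa using f2_le_one x
  exact h1.continuousOn_mul hg.continuousOn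

/-- cell cost -/
noncomputable def cI (a b p : ℝ) : ℝ := ∫ x in a..b, (x - p)^2 * f2 x

/-- cell first moment about p -/
noncomputable def cZ (a b p : ℝ) : ℝ := ∫ x in a..b, (x - p) * f2 x

noncomputable def cM (a b : ℝ) : ℝ := ∫ x in a..b, 1 * f2 x

theorem cI_add (a b c p : ℝ) : cI a b p + cI b c p = cI a c p :=
  intervalIntegral.integral_add_adjacent_intervals (ii_mul (by fun_prop) _ _) (ii_mul (by fun_prop) _ _)

theorem cZ_add (a b c p : ℝ) : cZ a b p + cZ b c p = cZ a c p :=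
  intervalIntegral.integral_add_adjacent_intervals (ii_mul (by fun_prop) _ _) (ii_mul (by fun_prop) _ _)

theorem cI_self (a p : ℝ) : cI a a p = 0 := by simp [cI]

theorem cZ_sub (a b p q : ℝ) : cZ a b p = cZ a b q + (q - p) * cM a b := by
  unfold cZ cM
  rw [← intervalIntegral.integral_const_mul, ← intervalIntegral.integral_add (ii_mul (by fun_prop) _ _)
    ((ii_mul (g := fun _ => 1) (by fun_prop) _ _).const_mul _)]
  congr 1; ext x; ring

theorem cI_sub (a b p q : ℝ) : cI a b p = cI a b q + (q - p) * (2 * cZ a b ((p+q)/2)) := by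
  unfold cZ cI
  rw [← intervalIntegral.integral_const_mul, ← intervalIntegral.integral_const_mul,
    ← intervalIntegral.integral_add (ii_mul (by fun_prop) _ _)
    (((ii_mul (g := fun x => x - (p+q)/2) (by fun_prop) _ _).const_mul _).const_mul _)]
  congr 1; ext x; ring

theorem cM_pos {a b : ℝ} (h0 : 0 ≤ a) (h : a < b) (h1 : b ≤ 3/2) : 0 < cM a b := by
  apply intervalIntegral.intervalIntegral_pos_of_pos_on (ii_mul (by fun_prop) _ _) _ h
  intro x hx
  have := f2_pos (x := x) (by linarith [hx.1]) (by linarith [hx.2])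
  linarith

theorem cZ_pos {a b p : ℝ} (h0 : 0 ≤ a) (h : a < b) (h1 : b ≤ 3/2) (hp : p ≤ a) : 0 < cZ a b p := by
  apply intervalIntegral.intervalIntegral_pos_of_pos_on (ii_mul (by fun_prop) _ _) _ h
  intro x hx
  have := f2_pos (x := x) (by linarith [hx.1]) (by linarith [hx.2])
  exact mul_pos (by linarith [hx.1]) this

theorem cZ_nonneg {a b p : ℝ} (h0 : 0 ≤ a) (h : a ≤ b) (h1 : b ≤ 3/2) (hp : p ≤ a) : 0 ≤ cZ a b p := by
  rcases h.eq_or_lt with h | h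
  · subst h; simp [cZ]
  · exact (cZ_pos h0 h h1 hp).le

theorem cI_refl (a b p : ℝ) : cI (3/2 - b) (3/2 - a) (3/2 - p) = cI a b p := by
  unfold cI
  have := intervalIntegral.integral_comp_sub_left (a := a) (b := b)
    (fun x => (x - (3/2 - p))^2 * f2 x) (3/2 : ℝ)
  rw [← this]
  congr 1; ext x; rw [f2_refl]; ring

theorem cZ_refl (a b p : ℝ) : cZ (3/2 - b) (3/2 - a) (3/2 - p) = - cZ a b p := by
  unfold cZ
  have := intervalIntegral.integral_comp_sub_left (a := a) (b := b)
    (fun x => (x - (3/2 - p)) * f2 x) (3/2 : ℝ)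
  rw [← this, ← intervalIntegral.integral_neg]
  congr 1; ext x; rw [f2_refl]; ring

theorem cZ_neg {a b p : ℝ} (h0 : 0 ≤ a) (h : a < b) (h1 : b ≤ 3/2) (hp : b ≤ p) : cZ a b p < 0 := by
  have := cZ_pos (a := 3/2 - b) (b := 3/2 - a) (p := 3/2 - p) (by linarith) (by linarith)
    (by linarith) (by linarith)
  rw [cZ_refl] at this; linarith

theorem cZ_nonpos {a b p : ℝ} (h0 : 0 ≤ a) (h : a ≤ b) (h1 : b ≤ 3/2) (hp : b ≤ p) : cZ a b p ≤ 0 := by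
  rcases h.eq_or_lt with h | h
  · subst h; simp [cZ]
  · exact (cZ_neg h0 h h1 hp).le

theorem cen_mem {a b p : ℝ} (h0 : 0 ≤ a) (h : a < b) (h1 : b ≤ 3/2) (hp : cZ a b p = 0) :
    a < p ∧ p < b := by
  constructor
  · by_contra hh; push Not at hh; linarith [cZ_pos h0 h h1 hh]
  · by_contra hh; push Not at hh; linarith [cZ_neg h0 h h1 hh]

theorem cen_mono {a b p a' b' p' : ℝ} (h0 : 0 ≤ a) (h : a < b) (h' : a' < b')
    (h1 : b' ≤ 3/2) (ha : a ≤ a') (hb : b ≤ b') (hp : cZ a b p = 0) (hp' : cZ a' b' p' = 0) :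
    p ≤ p' := by
  have m := cen_mem h0 h (by linarith) hp
  have m' := cen_mem (by linarith) h' h1 hp'
  rcases lt_or_ge p a' with hh | hh
  · linarith
  have e1 := cZ_add a a' b' p
  have e2 := cZ_add a b b' p
  have e3 := cZ_nonpos (a := a) (b := a') (p := p) h0 ha (by linarith) hh
  have e4 := cZ_nonneg (a := b) (b := b') (p := p) (by linarith) hb h1 (by linarith)
  have e5 := cZ_sub a' b' p p'
  have e6 := cM_pos (by linarith) h' h1
  by_contra hc; push Not at hc
  nlinarith

theorem cen_strict {a b p a' b' p' : ℝ} (h0 : 0 ≤ a) (h : a < b) (h' : a' < b')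
    (h1 : b' ≤ 3/2) (ha : a ≤ a') (hb : b ≤ b') (hs : a < a' ∨ b < b')
    (hp : cZ a b p = 0) (hp' : cZ a' b' p' = 0) :
    p < p' := by
  rcases (cen_mono h0 h h' h1 ha hb hp hp').lt_or_eq with hl | he
  · exact hl
  exfalso
  subst he
  have m := cen_mem h0 h (by linarith) hp
  have m' := cen_mem (by linarith) h' h1 hp'
  have e1 := cZ_add a a' b' p
  have e2 := cZ_add a b b' p
  have e3 := cZ_nonpos (a := a) (b := a') (p := p) h0 ha (by linarith) m'.1.le
  have e4 := cZ_nonneg (a := b) (b := b') (p := p) (by linarith) hb h1 (by linarith)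
  rcases hs with hs | hs
  · linarith [cZ_neg (a := a) (b := a') (p := p) h0 hs (by linarith) m'.1.le]
  · linarith [cZ_pos (a := b) (b := b') (p := p) (by linarith) hs h1 (by linarith)]

theorem cI_left {a b : ℝ} (h0 : 0 ≤ a) (h : a ≤ b) (h1 : b ≤ 1/2) (p : ℝ) :
    cI a b p = ((b-p)^3 - (a-p)^3)/6 := by
  have : cI a b p = ∫ x in a..b, (1/2) * (x - p)^2 := by
    apply intervalIntegral.integral_congr
    intro x hx; rw [uIcc_of_le h] at hx
    simp only
    rw [f2_left (by linarith [hx.1]) (by linarith [hx.2])]; ring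
  rw [this, intervalIntegral.integral_const_mul,
    intervalIntegral.integral_comp_sub_right (fun x => x^2) p, integral_pow]
  push_cast; ring

theorem cZ_left {a b : ℝ} (h0 : 0 ≤ a) (h : a ≤ b) (h1 : b ≤ 1/2) (p : ℝ) :
    cZ a b p = ((b-p)^2 - (a-p)^2)/4 := by
  have : cZ a b p = ∫ x in a..b, (1/2) * (x - p) := by
    apply intervalIntegral.integral_congr
    intro x hx; rw [uIcc_of_le h] at hx
    simp only
    rw [f2_left (by linarith [hx.1]) (by linarith [hx.2])]; ring
  rw [this, intervalIntegral.integral_const_mul,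
    intervalIntegral.integral_comp_sub_right (fun x => x) p, integral_id]
  ring

theorem cI_mid {a b : ℝ} (h0 : 1/2 ≤ a) (h : a ≤ b) (h1 : b ≤ 1) (p : ℝ) :
    cI a b p = ((b-p)^3 - (a-p)^3)/3 := by
  have : cI a b p = ∫ x in a..b, (x - p)^2 := by
    apply intervalIntegral.integral_congr_ae
    have h1n : ∀ᵐ x : ℝ, x ≠ 1 := by
      simp [ae_iff, measure_singleton]
    filter_upwards [h1n] with x hx1 hx
    rw [uIoc_of_le h] at hx
    rw [f2_mid (by linarith [hx.1]) (lt_of_le_of_ne (by linarith [hx.2]) hx1)]; ring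
  rw [this,
    intervalIntegral.integral_comp_sub_right (fun x => x^2) p, integral_pow]
  push_cast; ring

theorem cZ_mid {a b : ℝ} (h0 : 1/2 ≤ a) (h : a ≤ b) (h1 : b ≤ 1) (p : ℝ) :
    cZ a b p = ((b-p)^2 - (a-p)^2)/2 := by
  have : cZ a b p = ∫ x in a..b, (x - p) := by
    apply intervalIntegral.integral_congr_ae
    have h1n : ∀ᵐ x : ℝ, x ≠ 1 := by
      simp [ae_iff, measure_singleton]
    filter_upwards [h1n] with x hx1 hx
    rw [uIoc_of_le h] at hx
    rw [f2_mid (by linarith [hx.1]) (lt_of_le_of_ne (by linarith [hx.2]) hx1)]; ring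
  rw [this,
    intervalIntegral.integral_comp_sub_right (fun x => x) p, integral_id]

/-- nested cells: exchanging does not increase the cost -/
theorem swap_le {a b c d p q : ℝ} (h0 : 0 ≤ a) (hab : a ≤ b) (hbc : b ≤ c) (hcd : c ≤ d)
    (hd : d ≤ 3/2) (hq1 : b ≤ q) (hq2 : q ≤ c) :
    cI a c (min p q) + cI b d (max p q) ≤ cI a d p + cI b c q := by
  rcases le_total p q with h | h
  · rw [min_eq_left h, max_eq_right h]
    have e1 := cI_add a c d p
    have e2 := cI_add b c d q
    have e3 := cI_sub c d p q
    have e4 := cZ_nonneg (a := c) (b := d) (p := (p+q)/2) (by linarith) hcd hd (by linarith)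
    nlinarith
  · rw [min_eq_right h, max_eq_left h]
    have e1 := cI_add a b d p
    have e2 := cI_add a b c q
    have e3 := cI_sub a b p q
    have e4 := cZ_nonpos (a := a) (b := b) (p := (p+q)/2) h0 hab (by linarith) (by linarith)
    nlinarith


def Cfg (n : ℕ) (c : ℕ → ℝ) : Prop := c 0 = 0 ∧ c n = 3/2 ∧ ∀ i < n, c i ≤ c (i+1)

noncomputable def cost (n : ℕ) (c p : ℕ → ℝ) : ℝ := ∑ i ∈ Finset.range n, cI (c i) (c (i+1)) (p i)

def Opt (n : ℕ) (c p : ℕ → ℝ) : Prop :=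
  Cfg n c ∧ ∀ c' p', Cfg n c' → cost n c p ≤ cost n c' p'

theorem Cfg.mono {n : ℕ} {c : ℕ → ℝ} (h : Cfg n c) {i j : ℕ} (hij : i ≤ j) (hj : j ≤ n) : c i ≤ c j := by
  induction j, hij using Nat.le_induction with
  | base => exact le_rfl
  | succ k hk ih => exact (ih (by omega)).trans (h.2.2 k (by omega))

theorem Cfg.nonneg {n : ℕ} {c : ℕ → ℝ} (h : Cfg n c) {i : ℕ} (hj : i ≤ n) : 0 ≤ c i := by
  have := h.mono (Nat.zero_le i) hj; rw [h.1] at this; exact this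

theorem Cfg.le {n : ℕ} {c : ℕ → ℝ} (h : Cfg n c) {i : ℕ} (hj : i ≤ n) : c i ≤ 3/2 := by
  have := h.mono hj le_rfl; rw [h.2.1] at this; exact this

theorem cI_cen {a b q : ℝ} (hq : cZ a b q = 0) (p : ℝ) :
    cI a b p = cI a b q + (p-q)^2 * cM a b := by
  rw [cI_sub a b p q, cZ_sub a b ((p+q)/2) q, hq]; ring

theorem cen_exists {a b : ℝ} (h0 : 0 ≤ a) (h : a < b) (h1 : b ≤ 3/2) : ∃ q, cZ a b q = 0 := by
  have := cM_pos h0 h h1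
  refine ⟨cZ a b 0 / cM a b, ?_⟩
  rw [cZ_sub a b _ 0]; field_simp; ring

theorem split_lt {a b : ℝ} (h0 : 0 ≤ a) (h : a < b) (h1 : b ≤ 3/2) (p : ℝ) :
    ∃ t q q', a ≤ t ∧ t ≤ b ∧ cI a t q + cI t b q' < cI a b p := by
  have ht1 : a < (a+b)/2 := by linarith
  have ht2 : (a+b)/2 < b := by linarith
  obtain ⟨q, hq⟩ := cen_exists h0 ht1 (by linarith)
  obtain ⟨q', hq'⟩ := cen_exists (by linarith) ht2 h1
  refine ⟨(a+b)/2, q, q', ht1.le, ht2.le, ?_⟩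
  have m := cen_mem h0 ht1 (by linarith) hq
  have m' := cen_mem (by linarith) ht2 h1 hq'
  rw [← cI_add a ((a+b)/2) b p, cI_cen hq p, cI_cen hq' p]
  have p1 := cM_pos h0 ht1 (by linarith)
  have p2 := cM_pos (by linarith) ht2 h1
  have : p ≠ q ∨ p ≠ q' := by
    by_contra hc; push Not at hc; linarith [hc.1, hc.2]
  rcases this with hh | hh
  · have : 0 < (p-q)^2 := by have := sub_ne_zero.mpr hh; positivity
    nlinarith [sq_nonneg (p-q')]
  · have : 0 < (p-q')^2 := by have := sub_ne_zero.mpr hh; positivity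
    nlinarith [sq_nonneg (p-q)]

theorem Opt.local1 {n : ℕ} {c p : ℕ → ℝ} (h : Opt n c p) {i : ℕ} (hi : i < n) (q : ℝ) :
    cI (c i) (c (i+1)) (p i) ≤ cI (c i) (c (i+1)) q := by
  have := h.2 c (Function.update p i q) h.1
  unfold cost at this
  rw [← Finset.add_sum_erase _ _ (Finset.mem_range.mpr hi),
    ← Finset.add_sum_erase (Finset.range n) (fun j => cI (c j) (c (j+1)) (Function.update p i q j)) (Finset.mem_range.mpr hi)] at this
  have e : ∑ x ∈ (Finset.range n).erase i, cI (c x) (c (x+1)) (Function.update p i q x)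
      = ∑ x ∈ (Finset.range n).erase i, cI (c x) (c (x+1)) (p x) := by
    apply Finset.sum_congr rfl
    intro x hx
    rw [Function.update_of_ne (Finset.ne_of_mem_erase hx)]
  simp only [Function.update_self] at this
  linarith

theorem Opt.local2 {n : ℕ} {c p : ℕ → ℝ} (h : Opt n c p) {i : ℕ} (hi : i + 1 < n) {t : ℝ}
    (ht1 : c i ≤ t) (ht2 : t ≤ c (i+2)) (q q' : ℝ) :
    cI (c i) (c (i+1)) (p i) + cI (c (i+1)) (c (i+2)) (p (i+1))
      ≤ cI (c i) t q + cI t (c (i+2)) q' := by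
  set c' : ℕ → ℝ := fun x => if x = i+1 then t else c x with hc'
  set p' : ℕ → ℝ := fun x => if x = i then q else if x = i+1 then q' else p x with hp'
  have hcfg : Cfg n c' := by
    refine ⟨?_, ?_, ?_⟩
    · simp [hc', h.1.1]
    · simp only [hc']; rw [if_neg (by omega)]; exact h.1.2.1
    · intro x hx
      simp only [hc']
      have := h.1.2.2 x hx
      split_ifs with h1 h2 h2
      · omega
      · subst h1; exact ht2
      · have : x = i := by omega
        subst this; exact ht1
      · exact this
  have := h.2 c' p' hcfg
  have key : ∑ x ∈ Finset.range n, (cI (c' x) (c' (x+1)) (p' x) - cI (c x) (c (x+1)) (p x))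
      = ∑ x ∈ ({i, i+1} : Finset ℕ), (cI (c' x) (c' (x+1)) (p' x) - cI (c x) (c (x+1)) (p x)) := by
    symm
    apply Finset.sum_subset
    · intro x hx; simp only [Finset.mem_insert, Finset.mem_singleton] at hx
      simp only [Finset.mem_range]; omega
    · intro x _ hx
      simp only [Finset.mem_insert, Finset.mem_singleton, not_or] at hx
      simp only [hc', hp']
      rw [if_neg hx.2, if_neg (by omega), if_neg hx.1, if_neg hx.2]; ring
  rw [Finset.sum_sub_distrib, Finset.sum_pair (by omega)] at key
  unfold cost at this
  have e1 : c' i = c i := by simp [hc']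
  have e2 : c' (i+1) = t := by simp [hc']
  have e3 : c' (i+1+1) = c (i+2) := by simp [hc']
  have e4 : p' i = q := by simp [hp']
  have e5 : p' (i+1) = q' := by simp [hp']
  rw [e1, e2, e3, e4, e5] at key
  have e6 : c (i+1+1) = c (i+2) := rfl
  rw [e6] at key
  linarith

theorem Opt.lt {n : ℕ} {c p : ℕ → ℝ} (h : Opt n c p) {i : ℕ} (hi : i < n) : c i < c (i+1) := by
  by_contra hcon
  have hd : c i = c (i+1) := le_antisymm (h.1.2.2 i hi) (not_lt.mp hcon)
  have up : ∀ j, j + 1 < n → c j = c (j+1) → c (j+1) = c (j+2) := by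
    intro j hj he
    by_contra hne
    have hlt : c (j+1) < c (j+2) := lt_of_le_of_ne (h.1.2.2 (j+1) hj) hne
    obtain ⟨t, q, q', h1, h2, h3⟩ := split_lt (h.1.nonneg (i := j+1) (by omega)) hlt (h.1.le (by omega)) (p (j+1))
    have := h.local2 hj (t := t) (by rw [he]; exact h1) h2 q q'
    rw [he, cI_self] at this
    linarith
  have dn : ∀ j, j + 1 < n → c (j+1) = c (j+2) → c j = c (j+1) := by
    intro j hj he
    by_contra hne
    have hlt : c j < c (j+1) := lt_of_le_of_ne (h.1.2.2 j (by omega)) hne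
    obtain ⟨t, q, q', h1, h2, h3⟩ := split_lt (h.1.nonneg (i := j) (by omega)) hlt (h.1.le (by omega)) (p j)
    have := h.local2 hj (t := t) h1 (by rw [← he]; exact h2) q q'
    rw [← he, cI_self] at this
    linarith
  have hup : ∀ j, i ≤ j → j < n → c j = c (j+1) := by
    intro j hj
    induction j, hj using Nat.le_induction with
    | base => intro _; exact hd
    | succ k hk ih => intro hk'; exact up k hk' (ih (by omega))
  have hdn : ∀ j, j ≤ i → c (i - j) = c (i - j + 1) := by
    intro j
    induction j with
    | zero => intro _; exact hd
    | succ k ih =>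
      intro hk
      have e : i - k = (i - (k+1)) + 1 := by omega
      have := ih (by omega)
      rw [e] at this
      exact dn _ (by omega) this
  have hall : ∀ j, j ≤ n → c j = 0 := by
    intro j
    induction j with
    | zero => intro _; exact h.1.1
    | succ k ih =>
      intro hk
      rw [← ih (by omega)]
      rcases le_total i k with h1 | h1
      · exact (hup k h1 (by omega)).symm
      · have := hdn (i - k) (by omega)
        rw [show i - (i - k) = k by omega] at this
        exact this.symm
  have := hall n le_rfl
  rw [h.1.2.1] at this
  norm_num at this

theorem Opt.strictMono {n : ℕ} {c p : ℕ → ℝ} (h : Opt n c p) {i j : ℕ} (hij : i < j) (hj : j ≤ n) : c i < c j :=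
  (h.lt (by omega)).trans_le (h.1.mono hij hj)

theorem Opt.cen {n : ℕ} {c p : ℕ → ℝ} (h : Opt n c p) {i : ℕ} (hi : i < n) :
    cZ (c i) (c (i+1)) (p i) = 0 := by
  obtain ⟨q, hq⟩ := cen_exists (h.1.nonneg hi.le) (h.lt hi) (h.1.le hi)
  have e := h.local1 hi q
  rw [cI_cen hq (p i)] at e
  have := cM_pos (h.1.nonneg hi.le) (h.lt hi) (h.1.le hi)
  have h2 : (p i - q)^2 ≤ 0 := by
    by_contra hc; push Not at hc; nlinarith
  have h3 : p i - q = 0 := by nlinarith [sq_nonneg (p i - q), pow_eq_zero_iff (two_ne_zero) |>.mp (le_antisymm h2 (sq_nonneg _))]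
  rw [show p i = q by linarith]; exact hq

theorem Opt.mem {n : ℕ} {c p : ℕ → ℝ} (h : Opt n c p) {i : ℕ} (hi : i < n) :
    c i < p i ∧ p i < c (i+1) :=
  cen_mem (h.1.nonneg hi.le) (h.lt hi) (h.1.le hi) (h.cen hi)

theorem Opt.mid {n : ℕ} {c p : ℕ → ℝ} (h : Opt n c p) {i : ℕ} (hi : i + 1 < n) :
    2 * c (i+1) = p i + p (i+1) := by
  have m1 := h.mem (i := i) (by omega)
  have m2 := h.mem (i := i+1) hi
  have b0 := h.1.nonneg (i := i) (by omega)
  have b2 := h.1.le (i := i+1+1) (by omega)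
  set t := (p i + p (i+1))/2 with ht
  have l := h.local2 hi (t := t) (by linarith) (by change t ≤ c (i+1+1); linarith) (p i) (p (i+1))
  have d := cI_sub (c (i+1)) t (p (i+1)) (p i)
  have ht' : (p (i+1) + p i)/2 = t := by rw [ht]; ring
  rw [ht'] at d
  have a1 := cI_add (c i) (c (i+1)) t (p i)
  have a2 := cI_add (c (i+1)) t (c (i+2)) (p (i+1))
  rcases lt_trichotomy (c (i+1)) t with hh | hh | hh
  · have := cZ_neg (a := c (i+1)) (b := t) (p := t) (by linarith) hh (by linarith) le_rfl
    nlinarith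
  · linarith
  · have z := cZ_pos (a := t) (b := c (i+1)) (p := t) (by linarith) hh (by linarith) le_rfl
    have z2 := cZ_add (c (i+1)) t (c (i+1)) t
    have z3 : cZ (c (i+1)) (c (i+1)) t = 0 := by simp [cZ]
    nlinarith

theorem Opt.p_lt {n : ℕ} {c p : ℕ → ℝ} (h : Opt n c p) {i j : ℕ} (hij : i < j) (hj : j < n) : p i < p j := by
  have m1 := h.mem (i := i) (by omega)
  have m2 := h.mem (i := j) hj
  have := h.1.mono (i := i+1) (j := j) (by omega) hj.le
  linarith

theorem cfg_refl {n : ℕ} {c : ℕ → ℝ} (h : Cfg n c) : Cfg n (fun i => 3/2 - c (n - i)) := by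
  refine ⟨?_, ?_, ?_⟩
  · simp [h.2.1]
  · simp [h.1]
  · intro i hi
    have := h.2.2 (n - (i+1)) (by omega)
    rw [show n - (i+1) + 1 = n - i by omega] at this
    simp only; linarith

theorem cost_refl (n : ℕ) (c p : ℕ → ℝ) :
    cost n (fun i => 3/2 - c (n - i)) (fun i => 3/2 - p (n - 1 - i)) = cost n c p := by
  unfold cost
  rw [← Finset.sum_range_reflect (fun i => cI (c i) (c (i+1)) (p i))]
  apply Finset.sum_congr rfl
  intro i hi
  have hi := Finset.mem_range.mp hi
  simp only
  rw [cI_refl]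
  rw [show n - (i+1) = n - 1 - i by omega, show n - i = n - 1 - i + 1 by omega]

theorem Opt.refl {n : ℕ} {c p : ℕ → ℝ} (h : Opt n c p) :
    Opt n (fun i => 3/2 - c (n - i)) (fun i => 3/2 - p (n - 1 - i)) := by
  refine ⟨cfg_refl h.1, ?_⟩
  intro c' p' hc'
  rw [cost_refl]
  rw [← cost_refl n c' p']
  exact h.2 _ _ (cfg_refl hc')


noncomputable def swC (u t j i : ℕ) (c c' : ℕ → ℝ) (x : ℕ) : ℝ :=
  if j + u < x ∧ x ≤ i + u then c' (x - u + t) else c x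

noncomputable def swP (F : ℝ → ℝ → ℝ) (u t j i : ℕ) (p p' : ℕ → ℝ) (x : ℕ) : ℝ :=
  if x = j + u ∨ x = i + u then F (p x) (p' (x - u + t))
  else if j + u < x ∧ x < i + u then p' (x - u + t) else p x

theorem swC_in {u t j i : ℕ} {c c' : ℕ → ℝ} {y : ℕ} (h1 : j < y) (h2 : y ≤ i) :
    swC u t j i c c' (y + u) = c' (y + t) := by
  unfold swC; rw [if_pos (by omega)]; congr 1; omega

theorem swC_out {u t j i : ℕ} {c c' : ℕ → ℝ} {x : ℕ} (h : x ≤ j + u ∨ i + u < x) :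
    swC u t j i c c' x = c x := by
  unfold swC; rw [if_neg (by omega)]

theorem swP_end {F : ℝ → ℝ → ℝ} {u t j i : ℕ} {p p' : ℕ → ℝ} {y : ℕ} (h : y = j ∨ y = i) :
    swP F u t j i p p' (y + u) = F (p (y+u)) (p' (y + t)) := by
  unfold swP; rw [if_pos (by omega)]; congr 2; omega

theorem swP_in {F : ℝ → ℝ → ℝ} {u t j i : ℕ} {p p' : ℕ → ℝ} {y : ℕ} (h1 : j < y) (h2 : y < i) :
    swP F u t j i p p' (y + u) = p' (y + t) := by
  unfold swP; rw [if_neg (by omega), if_pos (by omega)]; congr 1; omega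

theorem swP_out {F : ℝ → ℝ → ℝ} {u t j i : ℕ} {p p' : ℕ → ℝ} {x : ℕ} (hji : j < i)
    (h : x < j + u ∨ i + u < x) :
    swP F u t j i p p' x = p x := by
  unfold swP; rw [if_neg (by omega), if_neg (by omega)]

theorem cost_sw (F : ℝ → ℝ → ℝ) {n u t j i : ℕ} (c c' p p' : ℕ → ℝ) (hji : j < i) (hi : i + u < n) :
    cost n (swC u t j i c c') (swP F u t j i p p') - cost n c p
     = ∑ y ∈ Finset.Icc j i, (cI (swC u t j i c c' (y+u)) (swC u t j i c c' (y+u+1)) (swP F u t j i p p' (y+u))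
        - cI (c (y+u)) (c (y+u+1)) (p (y+u))) := by
  unfold cost
  rw [← Finset.sum_sub_distrib]
  refine Eq.trans ?_ (Finset.sum_map (Finset.Icc j i) (addRightEmbedding u)
    (fun x => cI (swC u t j i c c' x) (swC u t j i c c' (x+1)) (swP F u t j i p p' x)
        - cI (c x) (c (x+1)) (p x)))
  symm
  apply Finset.sum_subset
  · intro x hx
    simp only [Finset.mem_map, Finset.mem_Icc, addRightEmbedding_apply] at hx
    obtain ⟨y, hy, rfl⟩ := hx
    simp only [Finset.mem_range]; omega
  · intro x hx hnx
    have : x < j + u ∨ i + u < x := by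
      by_contra hc
      push Not at hc
      apply hnx
      simp only [Finset.mem_map, Finset.mem_Icc, addRightEmbedding_apply]
      exact ⟨x - u, by omega, by omega⟩
    rw [swC_out (by omega), swC_out (by omega), swP_out hji this]; ring

theorem cfg_sw {n n' u t j i : ℕ} {c c' : ℕ → ℝ} (h : Cfg n c) (h' : Cfg n' c') (hji : j < i)
    (hi : i + u < n) (hi' : i + t < n')
    (h1 : c (j + u) ≤ c' (j+1+t)) (h2 : c' (i+t) ≤ c (i+1+u)) :
    Cfg n (swC u t j i c c') := by
  refine ⟨?_, ?_, ?_⟩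
  · rw [swC_out (by omega)]; exact h.1
  · rw [swC_out (by omega)]; exact h.2.1
  · intro x hx
    by_cases ha : x < j + u ∨ i + u < x
    · rw [swC_out (by omega), swC_out (by omega)]; exact h.2.2 x hx
    · push Not at ha
      obtain ⟨y, rfl⟩ : ∃ y, x = y + u := ⟨x - u, by omega⟩
      rw [show y + u + 1 = (y+1) + u by omega]
      rcases eq_or_lt_of_le (show j ≤ y by omega) with hy | hy
      · subst hy
        rw [swC_out (by omega), swC_in (by omega) (by omega)]; exact h1
      · rcases eq_or_lt_of_le (show y ≤ i by omega) with hz | hz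
        · subst hz
          rw [swC_out (x := y+1+u) (by omega), swC_in (by omega) (by omega)]; exact h2
        · rw [swC_in (by omega) (by omega), swC_in (by omega) (by omega)]
          rw [show y + 1 + t = y + t + 1 by omega]
          exact h'.2.2 _ (by omega)

theorem double_swap {n n' u t j i : ℕ} {c c' p p' : ℕ → ℝ} (h : Opt n c p) (h' : Opt n' c' p')
    (hji : j < i) (hi : i + u < n) (hi' : i + t < n')
    (hj1 : c' (j+t) ≤ c (j+u)) (hj2 : c (j+1+u) ≤ c' (j+1+t))
    (hi1 : c (i+u) ≤ c' (i+t)) (hi2 : c' (i+1+t) ≤ c (i+1+u)) :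
    Opt n (swC u t j i c c') (swP max u t j i p p') ∧
    Opt n' (swC t u j i c' c) (swP min t u j i p' p) := by
  have mj := h.mem (i := j+u) (by omega)
  have mi' := h'.mem (i := i+t) (by omega)
  have mj' := h'.lt (i := j+t) (by omega)
  have mi := h.lt (i := i+u) (by omega)
  rw [show j + u + 1 = j + 1 + u by omega] at mj
  rw [show j + t + 1 = j + 1 + t by omega] at mj'
  rw [show i + u + 1 = i + 1 + u by omega] at mi
  rw [show i + t + 1 = i + 1 + t by omega] at mi'
  have c1 : Cfg n (swC u t j i c c') := cfg_sw h.1 h'.1 hji hi hi' (by linarith) (by linarith)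
  have c2 : Cfg n' (swC t u j i c' c) := cfg_sw h'.1 h.1 hji hi' hi (by linarith) (by linarith)
  have d1 := cost_sw max c c' p p' hji hi (t := t)
  have d2 := cost_sw min c' c p' p hji hi' (t := u)
  have tot : (cost n (swC u t j i c c') (swP max u t j i p p') - cost n c p) +
     (cost n' (swC t u j i c' c) (swP min t u j i p' p) - cost n' c' p') ≤ 0 := by
    rw [d1, d2, ← Finset.sum_add_distrib]
    apply Finset.sum_nonpos
    intro y hy
    rw [Finset.mem_Icc] at hy
    rw [show y + u + 1 = y + 1 + u by omega, show y + t + 1 = y + 1 + t by omega]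
    rcases eq_or_lt_of_le hy.1 with hyj | hyj
    · subst hyj
      rw [swC_out (x := j + u) (by omega), swC_out (x := j+t) (by omega), swC_in (by omega) (by omega),
        swC_in (by omega) (by omega), swP_end (by omega), swP_end (by omega)]
      have := swap_le (a := c' (j+t)) (b := c (j+u)) (c := c (j+1+u)) (d := c' (j+1+t))
        (p := p' (j+t)) (q := p (j+u))
        (h'.1.nonneg (by omega)) hj1 (by linarith) hj2 (h'.1.le (by omega)) mj.1.le mj.2.le
      rw [max_comm] at this
      linarith
    · rcases eq_or_lt_of_le hy.2 with hyi | hyi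
      · subst hyi
        rw [swC_out (x := y + 1 + u) (by omega), swC_out (x := y+1+t) (by omega), swC_in (by omega) (by omega),
          swC_in (by omega) (by omega), swP_end (by omega), swP_end (by omega)]
        have := swap_le (a := c (y+u)) (b := c' (y+t)) (c := c' (y+1+t)) (d := c (y+1+u))
          (p := p (y+u)) (q := p' (y+t))
          (h.1.nonneg (by omega)) hi1 (by linarith) hi2 (h.1.le (by omega)) mi'.1.le mi'.2.le
        rw [min_comm] at this
        linarith
      · rw [swC_in (by omega) (by omega), swC_in (by omega) (by omega), swC_in (by omega) (by omega),
          swC_in (by omega) (by omega), swP_in (by omega) (by omega), swP_in (by omega) (by omega)]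
        linarith
  have g1 := h.2 _ (swP max u t j i p p') c1
  have g2 := h'.2 _ (swP min t u j i p' p) c2
  constructor
  · refine ⟨c1, fun x y hx => ?_⟩
    have := h.2 x y hx
    linarith
  · refine ⟨c2, fun x y hx => ?_⟩
    have := h'.2 x y hx
    linarith

/-- the basic impossibility -/
theorem no_cross {n n' u t j i : ℕ} {c c' p p' : ℕ → ℝ} (h : Opt n c p) (h' : Opt n' c' p')
    (hji : j < i) (hi : i + u < n) (hi' : i + t < n')
    (hj1 : c' (j+t) ≤ c (j+u)) (hj2 : c (j+1+u) ≤ c' (j+1+t))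
    (hi1 : c (i+u) ≤ c' (i+t)) (hi2 : c' (i+1+t) ≤ c (i+1+u))
    (hs : c (i+u) < c' (i+t) ∨ c' (i+1+t) < c (i+1+u))
    (he : c' (i+1+t) = c (i+1+u) → i + 1 + t < n' ∧ i + 1 + u < n) : False := by
  obtain ⟨o1, o2⟩ := double_swap h h' hji hi hi' hj1 hj2 hi1 hi2
  have z1 := o1.cen (i := i+u) hi
  have z2 := o2.cen (i := i+t) hi'
  have z := h.cen (i := i+u) hi
  have z' := h'.cen (i := i+t) hi'
  have lt := h.lt hi
  have lt' := h'.lt hi'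
  have l1 := o1.lt hi
  have l2 := o2.lt hi'
  rw [show i + u + 1 = i + 1 + u by omega] at z z1 l1 lt
  rw [show i + t + 1 = i + 1 + t by omega] at z' z2 l2 lt'
  rw [swP_end (Or.inr rfl), swC_in hji le_rfl, swC_out (by omega)] at z1 z2
  rw [swC_in hji le_rfl, swC_out (by omega)] at l1 l2
  have ub := h.1.le (i := i+1+u) (by omega)
  have ub' := h'.1.le (i := i+1+t) (by omega)
  have lb := h.1.nonneg (i := i+u) (by omega)
  have lb' := h'.1.nonneg (i := i+t) (by omega)
  rcases le_or_gt (p (i+u)) (p' (i+t)) with hpq | hpq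
  · rw [min_eq_right hpq] at z2
    have hcd : c' (i+1+t) = c (i+1+u) := by
      by_contra hne
      have := cen_strict lb l2 lt ub le_rfl hi2 (Or.inr (lt_of_le_of_ne hi2 hne)) z2 z
      linarith
    obtain ⟨b1, b2⟩ := he hcd
    have hab : c (i+u) < c' (i+t) := by
      rcases hs with hs | hs
      · exact hs
      · linarith
    have hlt := cen_strict lb lt lt' ub' hi1 hcd.ge (Or.inl hab) z z'
    have m2 := o2.mid (i := i+t) (by omega)
    have m' := h'.mid (i := i+t) (by omega)
    rw [show i + t + 1 = i + 1 + t by omega] at m2 m'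
    rw [swP_end (Or.inr rfl), min_eq_right hpq, swC_out (by omega), swP_out hji (by omega)] at m2
    linarith
  · rw [min_eq_left hpq.le] at z2
    have hab : c (i+u) = c' (i+t) := by
      by_contra hne
      have := cen_strict lb l2 lt' ub' hi1 le_rfl (Or.inl (lt_of_le_of_ne hi1 hne)) z2 z'
      linarith
    obtain ⟨i, rfl⟩ : ∃ i0, i = i0 + 1 := ⟨i - 1, by omega⟩
    have m := h.mid (i := i+u) (by omega)
    have m' := h'.mid (i := i+t) (by omega)
    have m1 := o1.mid (i := i+u) (by omega)
    rw [show i + u + 1 = i + 1 + u by omega] at m m1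
    rw [show i + t + 1 = i + 1 + t by omega] at m'
    rw [swP_end (y := i+1) (Or.inr rfl), max_eq_left hpq.le, swC_in hji le_rfl] at m1
    rcases eq_or_lt_of_le (show j ≤ i by omega) with hj | hj
    · subst hj
      rw [swP_end (Or.inl rfl)] at m1
      rw [max_eq_right (by linarith)] at m1
      linarith
    · rw [swP_in hj (by omega)] at m1
      linarith

/-- discrete sign change -/
theorem first_cross (Q : ℕ → Prop) {a b : ℕ} (hab : a ≤ b) (ha : ¬ Q a) (hb : Q b) :
    ∃ j, a ≤ j ∧ j < b ∧ ¬ Q j ∧ Q (j+1) := by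
  induction b, hab using Nat.le_induction with
  | base => exact absurd hb ha
  | succ k hk ih =>
    by_cases hq : Q k
    · obtain ⟨j, h1, h2, h3⟩ := ih hq
      exact ⟨j, h1, by omega, h3⟩
    · exact ⟨k, hk, by omega, hq, hb⟩

theorem interlace_two {n : ℕ} {c c' p p' : ℕ → ℝ} (h : Opt n c p) (h' : Opt (n+2) c' p')
    {i : ℕ} (hi : i ≤ n) : c' i ≤ c i := by
  by_contra hc
  push Not at hc
  have h0 : ¬ (c 0 < c' 0) := by rw [h.1.1, h'.1.1]; exact lt_irrefl _
  have hn : ¬ (c n < c' n) := by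
    rw [h.1.2.1]; have := h'.1.le (i := n) (by omega); exact not_lt.mpr this
  obtain ⟨j, _, hj2, hj3, hj4⟩ := first_cross (fun x => c x < c' x) (Nat.zero_le i) h0 hc
  obtain ⟨k, hk1, hk2, hk3, hk4⟩ := first_cross (fun x => ¬ (c x < c' x)) hi (not_not.mpr hc) hn
  simp only [not_not] at hk3
  push Not at hj3 hk4
  apply no_cross (u := 0) (t := 0) h h' (show j < k by omega) (by omega) (by omega) hj3 hj4.le hk3.le hk4
    (Or.inl hk3)
  intro he
  refine ⟨by omega, ?_⟩
  by_contra hcon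
  have : k + 1 + 0 = n := by omega
  rw [this, h.1.2.1] at he
  have s := h'.strictMono (i := n) (j := n+2) (by omega) le_rfl
  rw [h'.1.2.1] at s
  linarith

theorem interlace_two' {n : ℕ} {c c' p p' : ℕ → ℝ} (h : Opt n c p) (h' : Opt (n+2) c' p')
    {i : ℕ} (hi : i ≤ n) : c i ≤ c' (i+2) := by
  have := interlace_two h.refl h'.refl (i := n - i) (by omega)
  rw [show n + 2 - (n - i) = i + 2 by omega, show n - (n - i) = i by omega] at this
  linarith

theorem interlace_same {n : ℕ} {c c' p p' : ℕ → ℝ} (h : Opt n c p) (h' : Opt n c' p')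
    {i : ℕ} (hi : i < n) : c i < c' (i+1) := by
  by_contra hc
  push Not at hc
  -- roles: the first sequence of `no_cross` is `c'` with offset 1
  have h0 : ¬ (c' (0+1) ≤ c 0) := by
    have := h'.lt (i := 0) (by omega)
    rw [h'.1.1] at this; rw [h.1.1]; exact not_le.mpr this
  have hn : ¬ (c' (n-1+1) ≤ c (n-1)) := by
    rw [show n - 1 + 1 = n by omega, h'.1.2.1]
    have := h.lt (i := n-1) (by omega)
    rw [show n - 1 + 1 = n by omega, h.1.2.1] at this
    exact not_le.mpr this
  obtain ⟨j, _, hj2, hj3, hj4⟩ := first_cross (fun x => c' (x+1) ≤ c x) (Nat.zero_le i) h0 hc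
  obtain ⟨k, hk1, hk2, hk3, hk4⟩ := first_cross (fun x => ¬ (c' (x+1) ≤ c x)) (show i ≤ n - 1 by omega) (not_not.mpr hc) hn
  simp only [not_not] at hk3
  push Not at hj3 hk4
  apply no_cross (u := 1) (t := 0) h' h (show j < k by omega) (by omega) (by omega) hj3.le hj4 hk3 hk4.le
    (Or.inr hk4)
  intro he
  exact absurd he hk4.ne

theorem interlace_same_p {n : ℕ} {c c' p p' : ℕ → ℝ} (h : Opt n c p) (h' : Opt n c' p')
    {i : ℕ} (hi : i + 1 < n) : p i < p' (i+1) :=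
  cen_strict (h.1.nonneg (by omega)) (h.lt (by omega)) (h'.lt hi) (h'.1.le (by omega))
    (interlace_same h h' (by omega)).le (interlace_same h h' hi).le
    (Or.inl (interlace_same h h' (by omega))) (h.cen (by omega)) (h'.cen hi)

theorem interlace_two_p {n : ℕ} {c c' p p' : ℕ → ℝ} (h : Opt n c p) (h' : Opt (n+2) c' p')
    {i : ℕ} (hi : i < n) : p' i ≤ p i :=
  cen_mono (h'.1.nonneg (by omega)) (h'.lt (by omega)) (h.lt hi) (h.1.le (by omega))
    (interlace_two h h' (by omega)) (interlace_two h h' hi) (h'.cen (by omega)) (h.cen hi)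

theorem interlace_two_p' {n : ℕ} {c c' p p' : ℕ → ℝ} (h : Opt n c p) (h' : Opt (n+2) c' p')
    {i : ℕ} (hi : i < n) : p i ≤ p' (i+2) :=
  cen_mono (h.1.nonneg (by omega)) (h.lt (by omega)) (h'.lt (by omega)) (h'.1.le (by omega))
    (interlace_two' h h' (by omega)) (interlace_two' h h' hi) (h.cen (by omega)) (h'.cen (by omega))


noncomputable def dm (α : Set ℝ) (x : ℝ) : ℝ := sInf ((fun a => (x - a) ^ 2) '' α)

theorem dm_cont {α : Set ℝ} (hf : α.Finite) (hne : α.Nonempty) : Continuous (dm α) := by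
  have hne' : hf.toFinset.Nonempty := by simpa using hne
  have : dm α = fun x => hf.toFinset.inf' hne' (fun a => (x - a)^2) := by
    ext x
    rw [Finset.inf'_eq_csInf_image]
    simp [dm]
  rw [this]
  apply Continuous.finset_inf'_apply
  intro i _
  fun_prop

theorem dm_le {α : Set ℝ} {a : ℝ} (ha : a ∈ α) (x : ℝ) : dm α x ≤ (x - a)^2 := by
  apply csInf_le
  · refine ⟨0, ?_⟩
    rintro _ ⟨b, _, rfl⟩
    exact sq_nonneg _
  · exact ⟨a, ha, rfl⟩

theorem le_dm {α : Set ℝ} (hne : α.Nonempty) {x v : ℝ} (h : ∀ a ∈ α, v ≤ (x-a)^2) : v ≤ dm α x := by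
  apply le_csInf (hne.image _)
  rintro _ ⟨b, hb, rfl⟩
  exact h b hb

theorem distortion_eq (α : Set ℝ) : distortion P2 α = ∫ x in (0:ℝ)..(3/2), dm α x * f2 x := by
  unfold distortion P2
  rw [integral_withDensity_eq_integral_toReal_smul (by exact f2_measurable.ennreal_ofReal)
    (by filter_upwards with x; exact ENNReal.ofReal_lt_top)]
  rw [intervalIntegral.integral_of_le (by norm_num), ← integral_Icc_eq_integral_Ioc,
    setIntegral_eq_integral_of_forall_compl_eq_zero]
  · congr 1; ext x
    rw [ENNReal.toReal_ofReal (f2_nonneg x), smul_eq_mul, mul_comm]; rfl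
  · intro x hx
    have : f2 x = 0 := by
      unfold f2
      rw [if_neg, if_neg]
      · rintro ⟨h1, h2⟩; exact hx ⟨by linarith, by linarith⟩
      · rintro (⟨h1, h2⟩ | ⟨h1, h2⟩) <;> exact hx ⟨by linarith, by linarith⟩
    rw [this, mul_zero]

theorem distortion_nonneg (Q : Measure ℝ) (α : Set ℝ) : 0 ≤ distortion Q α := by
  apply integral_nonneg
  intro x
  apply Real.sInf_nonneg
  rintro _ ⟨a, _, rfl⟩
  exact sq_nonneg _

theorem distortion_sum {α : Set ℝ} (hf : α.Finite) (hne : α.Nonempty) {n : ℕ} {c : ℕ → ℝ} (h : Cfg n c) :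
    distortion P2 α = ∑ i ∈ Finset.range n, ∫ x in (c i)..(c (i+1)), dm α x * f2 x := by
  rw [distortion_eq, intervalIntegral.sum_integral_adjacent_intervals, h.1, h.2.1]
  intro k _
  exact ii_mul (dm_cont hf hne) _ _

theorem quantErr_le_cost {n : ℕ} (hn : 1 ≤ n) {c : ℕ → ℝ} (h : Cfg n c) (p : ℕ → ℝ) :
    quantErr P2 n ≤ cost n c p := by
  set α : Set ℝ := (((Finset.range n).image p : Finset ℝ) : Set ℝ) with hα
  have hf : α.Finite := Finset.finite_toSet _
  have hmem : ∀ i < n, p i ∈ α := by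
    intro i hi
    rw [hα, Finset.mem_coe]
    exact Finset.mem_image_of_mem _ (Finset.mem_range.mpr hi)
  have hne : α.Nonempty := ⟨p 0, hmem 0 (by omega)⟩
  have hcard : α.ncard ≤ n := by
    rw [hα, Set.ncard_coe_finset]
    exact Finset.card_image_le.trans (by simp)
  have h1 : quantErr P2 n ≤ distortion P2 α := by
    apply csInf_le
    · refine ⟨0, ?_⟩
      rintro _ ⟨β, _, _, _, rfl⟩
      exact distortion_nonneg _ _
    · exact ⟨α, hf, hne, hcard, rfl⟩
  refine h1.trans ?_
  rw [distortion_sum hf hne h]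
  apply Finset.sum_le_sum
  intro i hi
  have hi := Finset.mem_range.mp hi
  apply intervalIntegral.integral_mono_on (h.2.2 i hi) (ii_mul (dm_cont hf hne) _ _) (ii_mul (by fun_prop) _ _)
  intro x _
  exact mul_le_mul_of_nonneg_right (dm_le (hmem i hi) x) (f2_nonneg x)

theorem exists_opt {n : ℕ} (hn : 1 ≤ n) {α : Set ℝ} (hα : IsOptimal P2 n α) :
    ∃ c p, Opt n c p ∧ α = p '' Iio n := by
  obtain ⟨hf, hc1, hcn, hopt⟩ := hα
  set s := hf.toFinset with hs
  have hm : α.ncard = s.card := Set.ncard_eq_toFinset_card α hf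
  set m := s.card with hmdef
  have hne : α.Nonempty := by
    rw [← Set.ncard_pos hf]; omega
  set e := s.orderEmbOfFin (hmdef.symm) with he
  set p : ℕ → ℝ := fun i => e ⟨min i (m-1), by omega⟩ with hp
  have pmono : ∀ i j, i ≤ j → p i ≤ p j := by
    intro i j hij
    apply e.monotone
    simp only [Fin.mk_le_mk]; omega
  have himg : α = p '' Iio n := by
    ext x
    constructor
    · intro hx
      have hx' : x ∈ Set.range e := by
        rw [he, Finset.range_orderEmbOfFin]; simpa [hs] using hx
      obtain ⟨y, rfl⟩ := hx'
      refine ⟨y, ?_, ?_⟩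
      · have := y.2; simp only [mem_Iio]; omega
      · simp only [hp]; congr 1; ext; simp only; have := y.2; omega
    · rintro ⟨i, _, rfl⟩
      have : p i ∈ Set.range e := ⟨_, rfl⟩
      rw [he, Finset.range_orderEmbOfFin] at this
      simpa [hs] using this
  set c : ℕ → ℝ := fun i => if i = 0 then 0 else if n ≤ i then 3/2 else
    max 0 (min (3/2) ((p (i-1) + p i)/2)) with hc
  have c0 : c 0 = 0 := by simp [hc]
  have cn : c n = 3/2 := by simp [hc]; omega
  have cmid : ∀ i, 0 < i → i < n → c i = max 0 (min (3/2) ((p (i-1) + p i)/2)) := by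
    intro i h1 h2; simp only [hc]; rw [if_neg (by omega), if_neg (by omega)]
  have cb : ∀ i, 0 ≤ c i ∧ c i ≤ 3/2 := by
    intro i; simp only [hc]; split_ifs
    · norm_num
    · norm_num
    · constructor
      · exact le_max_left _ _
      · exact max_le (by norm_num) (min_le_left _ _)
  have hcfg : Cfg n c := by
    refine ⟨c0, cn, ?_⟩
    intro i hi
    rcases Nat.eq_zero_or_pos i with h0 | h0
    · subst h0; rw [c0]; exact (cb _).1
    · rcases eq_or_lt_of_le (show i + 1 ≤ n by omega) with h1 | h1
      · rw [h1, cn]; exact (cb _).2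
      · rw [cmid i h0 hi, cmid (i+1) (by omega) h1]
        apply max_le_max le_rfl
        apply min_le_min le_rfl
        have := pmono (i-1) i (by omega)
        have := pmono i (i+1) (by omega)
        rw [show i + 1 - 1 = i by omega]
        linarith
  refine ⟨c, p, ⟨hcfg, ?_⟩, himg⟩
  intro c' p' hc'
  refine le_trans ?_ (quantErr_le_cost hn hc' p')
  rw [← hopt, distortion_sum hf hne hcfg]
  apply Finset.sum_le_sum
  intro i hi
  have hi := Finset.mem_range.mp hi
  apply intervalIntegral.integral_mono_on_of_le_Ioo (hcfg.2.2 i hi) (ii_mul (by fun_prop) _ _)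
    (ii_mul (dm_cont hf hne) _ _)
  intro x hx
  apply mul_le_mul_of_nonneg_right _ (f2_nonneg x)
  apply le_dm hne
  intro a ha
  rw [himg] at ha
  obtain ⟨j, hj, rfl⟩ := ha
  rw [mem_Iio] at hj
  have hx0 : 0 < x := (cb i).1.trans_lt hx.1
  have hx1 : x < 3/2 := hx.2.trans_le (cb (i+1)).2
  rcases lt_trichotomy j i with hji | hji | hji
  · have h1 := hx.1
    rw [cmid i (by omega) hi] at h1
    have h2 := (max_lt_iff.mp h1).2
    have h3 : (p (i-1) + p i)/2 < x := by
      rcases min_lt_iff.mp h2 with h | h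
      · linarith
      · exact h
    have h4 := pmono j (i-1) (by omega)
    have h5 := pmono j i (by omega)
    nlinarith
  · subst hji; exact le_rfl
  · have h1 := hx.2
    rw [cmid (i+1) (by omega) (by omega)] at h1
    have h3 : x < (p i + p (i+1))/2 := by
      rcases lt_max_iff.mp h1 with h | h
      · linarith
      · exact (lt_min_iff.mp h).2
    have h4 := pmono (i+1) j (by omega)
    have h5 := pmono i j (by omega)
    nlinarith


structure Shape (n A R : ℕ) (c p : ℕ → ℝ) (h g : ℝ) : Prop where
  cfg : Cfg n c
  hAR : A < R
  hR : R < n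
  cl : ∀ i ≤ A, c i = 2 * i * h
  pl : ∀ i ≤ A, p i = (2 * i + 1) * h
  cm : ∀ i, A < i → i ≤ R → c i = (2 * A + 1) * h + (2 * ((i:ℝ) - A) - 1) * g
  pm : ∀ i, A < i → i ≤ R → p i = (2 * A + 1) * h + 2 * ((i:ℝ) - A) * g
  hA : c A ≤ 1/2
  hA' : 1/2 ≤ c (A+1)
  hR1 : c R ≤ 1
  hR2 : 1 ≤ c (R+1)

theorem Shape.cost_eq {n A R : ℕ} {c p : ℕ → ℝ} {h g : ℝ} (S : Shape n A R c p h g) :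
    cost n c p = ((2*A+1) * h^3 + 2 * (2 * ((R:ℝ) - A)) * g^3 - (1/2 - (2*A+1)*h)^3) / 6
      + ((1 - p R)^3/3 + cI 1 (c (R+1)) (p R) + ∑ i ∈ Finset.Ico (R+1) n, cI (c i) (c (i+1)) (p i)) := by
  have hm := @Cfg.mono n c S.cfg
  have hAR := S.hAR
  have hRn := S.hR
  have e1 : cost n c p = ∑ i ∈ Finset.range A, cI (c i) (c (i+1)) (p i) + cI (c A) (c (A+1)) (p A)
      + ∑ i ∈ Finset.Ico (A+1) R, cI (c i) (c (i+1)) (p i) + cI (c R) (c (R+1)) (p R)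
      + ∑ i ∈ Finset.Ico (R+1) n, cI (c i) (c (i+1)) (p i) := by
    unfold cost
    rw [← Finset.sum_range_succ, Finset.sum_range_add_sum_Ico _ (by omega), ← Finset.sum_range_succ,
      Finset.sum_range_add_sum_Ico _ (by omega)]
  have e2 : ∀ i ∈ Finset.range A, cI (c i) (c (i+1)) (p i) = h^3/3 := by
    intro i hi
    have hi := Finset.mem_range.mp hi
    rw [cI_left (S.cfg.nonneg (by omega)) (S.cfg.2.2 i (by omega))
      ((hm (i := i+1) (j := A) hi (by omega)).trans S.hA), S.cl i hi.le, S.cl (i+1) hi, S.pl i hi.le]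
    push_cast; ring
  have e3 : ∀ i ∈ Finset.Ico (A+1) R, cI (c i) (c (i+1)) (p i) = 2*g^3/3 := by
    intro i hi
    have hi := Finset.mem_Ico.mp hi
    rw [cI_mid (S.hA'.trans (hm hi.1 (by omega))) (S.cfg.2.2 i (by omega))
      ((hm (i := i+1) (j := R) hi.2 (by omega)).trans S.hR1), S.cm i (by omega) (by omega), S.cm (i+1) (by omega) hi.2, S.pm i (by omega) (by omega)]
    push_cast; ring
  have hA1 : c (A+1) ≤ 1 := (hm (i := A+1) (j := R) hAR (by omega)).trans S.hR1
  have hR1 : 1/2 ≤ c R := S.hA'.trans (hm (i := A+1) (j := R) hAR (by omega))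
  have e4 : cI (c A) (c (A+1)) (p A) = (h^3 - (1/2 - (2*A+1)*h)^3 + 2 * g^3)/6 := by
    rw [← cI_add _ (1/2), cI_left (S.cfg.nonneg (by omega)) S.hA le_rfl, cI_mid le_rfl S.hA' hA1,
      S.cl A le_rfl, S.pl A le_rfl, S.cm (A+1) (by omega) hAR]
    push_cast; ring
  have e5 : cI (c R) (c (R+1)) (p R) = (1 - p R)^3/3 + g^3/3 + cI 1 (c (R+1)) (p R) := by
    rw [← cI_add _ 1, cI_mid hR1 S.hR1 le_rfl, S.cm R hAR le_rfl, S.pm R hAR le_rfl]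
    ring
  rw [e1, Finset.sum_congr rfl e2, Finset.sum_congr rfl e3, e4, e5]
  simp only [Finset.sum_const, Finset.card_range, Nat.card_Ico, nsmul_eq_mul]
  rw [Nat.cast_sub (by omega)]
  push_cast
  ring

/-- comparison of an optimal configuration with a competitor -/
theorem Shape.compare {n A R : ℕ} {c p : ℕ → ℝ} {h g : ℝ} (S : Shape n A R c p h g) (ho : Opt n c p)
    {A' : ℕ} {h' g' : ℝ} (hA'R : A' < R) (hh : 0 ≤ h') (hg : 0 ≤ g')
    (hp : (2 * A' + 1) * h' + 2 * ((R:ℝ) - A') * g' = p R)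
    (v1 : 2 * A' * h' ≤ 1/2) (v2 : 1/2 ≤ (2*A'+1) * h' + g') (v3 : p R - g' ≤ 1) :
    (2*A+1) * h^3 + 4 * ((R:ℝ) - A) * g^3 - (1/2 - (2*A+1)*h)^3
     ≤ (2*A'+1) * h'^3 + 4 * ((R:ℝ) - A') * g'^3 - (1/2 - (2*A'+1)*h')^3 := by
  have hRn := S.hR
  set c' : ℕ → ℝ := fun i => if i ≤ A' then 2 * i * h' else if i ≤ R then (2 * A' + 1) * h' + (2 * ((i:ℝ) - A') - 1) * g' else c i with hc'
  set p' : ℕ → ℝ := fun i => if i ≤ A' then (2 * i + 1) * h' else if i ≤ R then (2 * A' + 1) * h' + (2 * ((i:ℝ) - A')) * g' else p i with hp'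
  have cl : ∀ i ≤ A', c' i = 2 * i * h' := by
    intro i hi; simp only [hc']; rw [if_pos hi]
  have pl : ∀ i ≤ A', p' i = (2 * i + 1) * h' := by
    intro i hi; simp only [hp']; rw [if_pos hi]
  have cm : ∀ i, A' < i → i ≤ R → c' i = (2 * A' + 1) * h' + (2 * ((i:ℝ) - A') - 1) * g' := by
    intro i hi h2; simp only [hc']; rw [if_neg (by omega), if_pos h2]
  have pm : ∀ i, A' < i → i ≤ R → p' i = (2 * A' + 1) * h' + (2 * ((i:ℝ) - A')) * g' := by
    intro i hi h2; simp only [hp']; rw [if_neg (by omega), if_pos h2]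
  have cr : ∀ i, R < i → c' i = c i := by
    intro i hi; simp only [hc']; rw [if_neg (by omega), if_neg (by omega)]
  have pr : ∀ i, R < i → p' i = p i := by
    intro i hi; simp only [hp']; rw [if_neg (by omega), if_neg (by omega)]
  have hpR : p' R = p R := by rw [pm R hA'R le_rfl, ← hp]
  have hcR : c' R = p R - g' := by rw [cm R hA'R le_rfl, ← hp]; ring
  have cfg' : Cfg n c' := by
    refine ⟨?_, ?_, ?_⟩
    · rw [cl 0 (by omega)]; simp
    · rw [cr n hRn, S.cfg.2.1]
    · intro i hi
      rcases lt_trichotomy i A' with h1 | h1 | h1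
      · rw [cl i h1.le, cl (i+1) h1]; push_cast; nlinarith
      · subst h1; rw [cl i le_rfl, cm (i+1) (by omega) hA'R]; push_cast; nlinarith
      · rcases lt_trichotomy i R with h2 | h2 | h2
        · rw [cm i h1 h2.le, cm (i+1) (by omega) h2]; push_cast; nlinarith
        · subst h2; rw [hcR, cr _ (by omega)]; exact v3.trans S.hR2
        · rw [cr i h2, cr (i+1) (by omega)]; exact S.cfg.2.2 i hi
  have S' : Shape n A' R c' p' h' g' := by
    refine ⟨cfg', hA'R, hRn, cl, pl, cm, pm, ?_, ?_, ?_, ?_⟩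
    · rw [cl _ le_rfl]; exact v1
    · rw [cm _ (by omega) hA'R]; push_cast; linarith
    · rw [hcR]; exact v3
    · rw [cr _ (by omega)]; exact S.hR2
  have key := ho.2 c' p' cfg'
  rw [S.cost_eq, S'.cost_eq, hpR, cr _ (by omega)] at key
  have es : ∑ i ∈ Finset.Ico (R+1) n, cI (c' i) (c' (i+1)) (p' i) = ∑ i ∈ Finset.Ico (R+1) n, cI (c i) (c (i+1)) (p i) := by
    apply Finset.sum_congr rfl
    intro i hi
    have hi := Finset.mem_Ico.mp hi
    rw [cr i (by omega), cr (i+1) (by omega), pr i (by omega)]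
  rw [es] at key
  nlinarith

theorem left_index {n : ℕ} {c p : ℕ → ℝ} (ho : Opt n c p) : ∃ A, A < n ∧ c A ≤ 1/2 ∧ 1/2 < c (A+1) := by
  obtain ⟨j, _, h1, h2, h3⟩ := first_cross (fun i => 1/2 < c i) (Nat.zero_le n)
    (by rw [ho.1.1]; norm_num) (by rw [ho.1.2.1]; norm_num)
  exact ⟨j, h1, not_lt.mp h2, h3⟩

theorem left_cells {n : ℕ} {c p : ℕ → ℝ} (ho : Opt n c p) {A : ℕ} (hA : A < n) (hA2 : c A ≤ 1/2) :
    ∀ i ≤ A, c i = 2 * i * p 0 ∧ p i = (2 * i + 1) * p 0 := by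
  intro i
  induction i with
  | zero => intro _; rw [ho.1.1]; simp
  | succ i ih =>
    intro hi
    obtain ⟨h1, h2⟩ := ih (by omega)
    have hlt := ho.lt (i := i) (by omega)
    have hz := ho.cen (i := i) (by omega)
    rw [cZ_left (ho.1.nonneg (by omega)) hlt.le ((ho.1.mono hi (by omega)).trans hA2)] at hz
    have hmid : c (i+1) = 2 * p i - c i := by
      have : (c (i+1) - c i) * (c (i+1) + c i - 2 * p i) = 0 := by nlinarith
      rcases mul_eq_zero.mp this with h | h <;> linarith
    have hm := ho.mid (i := i) (by omega)
    have e1 : c (i+1) = 2 * (i+1:ℕ) * p 0 := by rw [hmid, h1, h2]; push_cast; ring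
    refine ⟨e1, ?_⟩
    have : p (i+1) = 2 * c (i+1) - p i := by linarith
    rw [this, e1, h2]; push_cast; ring

theorem mid_cells {n : ℕ} {c p : ℕ → ℝ} (ho : Opt n c p) {A R : ℕ} (hAR : A < R) (hR : R < n)
    (hA2 : 1/2 ≤ c (A+1)) (hR1 : c R ≤ 1) :
    ∀ i, A < i → i ≤ R → c i = p A + (2 * ((i:ℝ) - A) - 1) * (c (A+1) - p A) ∧
      p i = p A + 2 * ((i:ℝ) - A) * (c (A+1) - p A) := by
  intro i hi
  induction i, hi using Nat.le_induction with
  | base =>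
    intro hi
    have hm := ho.mid (i := A) (by omega)
    refine ⟨by push_cast; ring, ?_⟩
    push_cast; linarith
  | succ i hAi ih =>
    intro hi
    obtain ⟨h1, h2⟩ := ih (by omega)
    have hlt := ho.lt (i := i) (by omega)
    have hz := ho.cen (i := i) (by omega)
    rw [cZ_mid (hA2.trans (ho.1.mono hAi (by omega))) hlt.le ((ho.1.mono hi (by omega)).trans hR1)] at hz
    have hmid : c (i+1) = 2 * p i - c i := by
      have : (c (i+1) - c i) * (c (i+1) + c i - 2 * p i) = 0 := by nlinarith
      rcases mul_eq_zero.mp this with h | h <;> linarith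
    have hm := ho.mid (i := i) (by omega)
    have e1 : c (i+1) = p A + (2 * (((i+1:ℕ):ℝ) - A) - 1) * (c (A+1) - p A) := by rw [hmid, h1, h2]; push_cast; ring
    refine ⟨e1, ?_⟩
    have : p (i+1) = 2 * c (i+1) - p i := by linarith
    rw [this, e1, h2]; push_cast; ring

/-- Full structure: `A` left cells, `B` right cells. -/
structure Str (n A B : ℕ) (c p : ℕ → ℝ) (h k g : ℝ) : Prop where
  lt : A + B + 1 < n
  opt : Opt n c p
  sh : Shape n A (n-1-B) c p h g
  gpos : 0 < g
  hpos : 0 < h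
  kpos : 0 < k
  eqL : h^2 + (1/2 - (2*A+1)*h)^2 = 2 * g^2
  eqR : k^2 + (1/2 - (2*B+1)*k)^2 = 2 * g^2
  tot : (2*A+1)*h + (2*B+1)*k + 2*((n:ℝ)-1-A-B)*g = 3/2
  sL : 1/2 - (2*A+1)*h < g
  sL' : 2*A*h ≤ 1/2
  sR : 1/2 - (2*B+1)*k < g
  sR' : 2*B*k ≤ 1/2
  AB : A ≤ B + 1
  BA : B ≤ A + 1

set_option maxHeartbeats 1000000 in
theorem exists_str {n : ℕ} (hn : 4 ≤ n) {c p : ℕ → ℝ} (ho : Opt n c p) :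
    ∃ A B h k g, Str n A B c p h k g ∧
      Str n B A (fun i => 3/2 - c (n-i)) (fun i => 3/2 - p (n-1-i)) k h g := by
  obtain ⟨A, hAn, hA1, hA2⟩ := left_index ho
  obtain ⟨d, q, hd, hq, hr⟩ : ∃ d q : ℕ → ℝ, d = (fun i => 3/2 - c (n-i)) ∧
      q = (fun i => 3/2 - p (n-1-i)) ∧ Opt n d q := ⟨_, _, rfl, rfl, ho.refl⟩
  rw [← hd, ← hq]
  obtain ⟨B, hBn, hB1, hB2⟩ := left_index hr
  have AB : A ≤ B + 1 := by
    by_contra hc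
    have := interlace_same hr ho (i := B+1) (by omega)
    have := ho.1.mono (i := B+1+1) (j := A) (by omega) (by omega)
    linarith
  have BA : B ≤ A + 1 := by
    by_contra hc
    have := interlace_same ho hr (i := A+1) (by omega)
    have := hr.1.mono (i := A+1+1) (j := B) (by omega) (by omega)
    linarith
  have l1 := left_cells ho hAn hA1
  have l2 := left_cells hr hBn hB1
  set h := p 0 with hh
  set k := q 0 with hk
  have hpos : 0 < h := by have := ho.mem (i := 0) (by omega); rw [ho.1.1] at this; exact this.1
  have kpos : 0 < k := by have := hr.mem (i := 0) (by omega); rw [hr.1.1] at this; exact this.1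
  have dB : d B = 3/2 - c (n - B) := by rw [hd]
  have dB1 : d (B+1) = 3/2 - c (n - (B+1)) := by rw [hd]
  have qB : q B = 3/2 - p (n - 1 - B) := by rw [hq]
  have cA := (l1 A le_rfl).1
  have pA := (l1 A le_rfl).2
  have cB := (l2 B le_rfl).1
  have pB := (l2 B le_rfl).2
  have lt0 : A + B + 1 ≤ n := by
    by_contra hc
    have := ho.1.mono (i := n-B) (j := A) (by omega) (by omega)
    linarith
  have lt : A + B + 1 < n := by
    rcases lt0.lt_or_eq with h1 | h1
    · exact h1
    exfalso
    have eA : n - 1 - B = A := by omega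
    have eA' : n - B = A + 1 := by omega
    rw [eA] at qB; rw [eA'] at dB
    have hAge : (1:ℝ) ≤ A := by exact_mod_cast (by omega : 1 ≤ A)
    have hBge : (1:ℝ) ≤ B := by exact_mod_cast (by omega : 1 ≤ B)
    have hABge : (3:ℝ) ≤ A + B := by exact_mod_cast (by omega : 3 ≤ A + B)
    have t1 : (2*A+1)*h + (2*B+1)*k = 3/2 := by linarith
    have t2 : 2*A*h ≤ 1/2 := by linarith
    have t3 : 2*B*k ≤ 1/2 := by linarith
    have t4 : 1/2 ≤ h + k := by linarith
    rcases (by omega : 2 ≤ A ∨ 2 ≤ B) with h2 | h2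
    · have : (2:ℝ) ≤ A := by exact_mod_cast h2
      nlinarith
    · have : (2:ℝ) ≤ B := by exact_mod_cast h2
      nlinarith
  have eR : n - (B+1) = n - 1 - B := by omega
  have eR' : n - (A+1) = n - 1 - A := by omega
  have hcR : c (n-1-B) < 1 := by rw [eR] at dB1; linarith
  have hcR2 : 1 ≤ c (n-1-B+1) := by
    rw [show n - 1 - B + 1 = n - B by omega]; linarith
  have hdR : d (n-1-A) < 1 := by
    have : d (n-1-A) = 3/2 - c (A+1) := by simp only [hd]; congr 2; omega
    linarith
  have hdR2 : 1 ≤ d (n-1-A+1) := by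
    have : d (n-1-A+1) = 3/2 - c A := by simp only [hd]; congr 2; omega
    linarith
  set g := c (A+1) - p A with hg
  have m1 := mid_cells ho (A := A) (R := n-1-B) (by omega) (by omega) hA2.le hcR.le
  have m2 := mid_cells hr (A := B) (R := n-1-A) (by omega) (by omega) hB2.le hdR.le
  have gpos : 0 < g := by have := ho.mem (i := A) hAn; linarith
  have rr := m1 (n-1-B) (by omega) le_rfl
  have ecast : ((n-1-B : ℕ) : ℝ) = n - 1 - B := by
    rw [Nat.cast_sub (by omega), Nat.cast_sub (by omega)]; simp
  have gr : d (B+1) - q B = g := by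
    rw [dB1, qB, eR, rr.1, rr.2]; ring
  rw [gr] at m2
  have tot : (2*A+1)*h + (2*B+1)*k + 2*((n:ℝ)-1-A-B)*g = 3/2 := by
    have := rr.2
    rw [ecast] at this
    linarith
  have cA1 : c (A+1) ≤ 1 := (ho.1.mono (i := A+1) (j := n-1-B) (by omega) (by omega)).trans hcR.le
  have dB1' : d (B+1) ≤ 1 := (hr.1.mono (i := B+1) (j := n-1-A) (by omega) (by omega)).trans hdR.le
  have eqL : h^2 + (1/2 - (2*A+1)*h)^2 = 2 * g^2 := by
    have := ho.cen hAn
    rw [← cZ_add _ (1/2), cZ_left (ho.1.nonneg (by omega)) hA1 le_rfl, cZ_mid le_rfl hA2.le cA1] at this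
    rw [show c (A+1) = p A + g by simp [hg], pA, cA] at this
    linarith
  have eqR : k^2 + (1/2 - (2*B+1)*k)^2 = 2 * g^2 := by
    have := hr.cen hBn
    rw [← cZ_add _ (1/2), cZ_left (hr.1.nonneg (by omega)) hB1 le_rfl, cZ_mid le_rfl hB2.le dB1'] at this
    rw [show d (B+1) = q B + g by linarith, pB, cB] at this
    linarith
  refine ⟨A, B, h, k, g, ⟨lt, ho, ⟨ho.1, by omega, by omega, fun i hi => (l1 i hi).1, fun i hi => (l1 i hi).2,
    ?_, ?_, hA1, hA2.le, hcR.le, hcR2⟩, gpos, hpos, kpos, eqL, eqR, tot, by linarith, by linarith, by linarith, by linarith, AB, BA⟩,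
    ⟨by omega, hr, ⟨hr.1, by omega, by omega, fun i hi => (l2 i hi).1, fun i hi => (l2 i hi).2,
    ?_, ?_, hB1, hB2.le, hdR.le, hdR2⟩, gpos, kpos, hpos, eqR, eqL, by linarith, by linarith, by linarith, by linarith, by linarith, BA, AB⟩⟩
  · intro i h1 h2; rw [(m1 i h1 h2).1, ← hg, pA]
  · intro i h1 h2; rw [(m1 i h1 h2).2, ← hg, pA]
  · intro i h1 h2; rw [(m2 i h1 h2).1, pB]
  · intro i h1 h2; rw [(m2 i h1 h2).2, pB]


theorem Str.compare {n A B : ℕ} {c p : ℕ → ℝ} {h k g : ℝ} (S : Str n A B c p h k g)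
    {a b r s q : ℝ} (ha : a = 2*A+1) (hb : b = 2*((n:ℝ)-1-A-B)) (hr : r = h/g) (hs : s = (1/2 - a*h)/g)
    (hq : q = (1/2 - (2*B+1)*k)/g) {A' : ℕ} {a' b' θ : ℝ} (ha' : a' = 2*A'+1) (hb' : b' = a + b - a')
    (h1 : A' + B + 1 < n) (h2 : 0 ≤ r*a+θ) (h3 : 0 ≤ b - θ)
    (h4 : -((r*a+θ)/a') ≤ s - θ) (h5 : s - θ ≤ (b-θ)/b') (h6 : q ≤ (b-θ)/b') :
    a*r^3 + 2*b - s^3 ≤ (r*a+θ)^3/a'^2 + 2*(b-θ)^3/b'^2 - (s-θ)^3 := by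
  have gp := S.gpos
  have e1 : r * g = h := by rw [hr]; field_simp
  have e2 : s * g = 1/2 - a*h := by rw [hs]; field_simp
  have e3 : q * g = 1/2 - (2*B+1)*k := by rw [hq]; field_simp
  have a'p : 0 < a' := by rw [ha']; positivity
  have hn : (A':ℝ) + B + 1 + 1 ≤ n := by exact_mod_cast h1
  have b'p : 0 < b' := by rw [hb', ha, hb, ha']; linarith
  have ecast : ((n-1-B : ℕ) : ℝ) = n - 1 - B := by
    rw [Nat.cast_sub (by omega), Nat.cast_sub (by omega)]; simp
  have eb' : 2 * (((n-1-B:ℕ):ℝ) - A') = b' := by rw [ecast, hb', ha, hb, ha']; ring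
  have eb : 2 * (((n-1-B:ℕ):ℝ) - A) = b := by rw [ecast, hb]; ring
  have pR := S.sh.pm (n-1-B) S.sh.hAR le_rfl
  rw [eb, ← ha] at pR
  have tot := S.tot
  rw [← hb, ← ha] at tot
  have hg' : 0 ≤ (b-θ)/b' := div_nonneg h3 b'p.le
  have hh' : 0 ≤ (r*a+θ)/a' := div_nonneg h2 a'p.le
  have c1 : a' * ((r*a+θ)/a' * g) = (r*a+θ) * g := by field_simp
  have c2 : b' * ((b-θ)/b' * g) = (b-θ) * g := by field_simp
  have key := S.sh.compare S.opt (A' := A') (h' := (r*a+θ)/a' * g) (g' := (b-θ)/b' * g) (by omega)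
    (by positivity) (by positivity) (by rw [← ha', eb', c1, c2, pR, ← e1]; ring)
    (by have := mul_le_mul_of_nonneg_right h4 gp.le
        have e : 2 * (A':ℝ) * ((r*a+θ)/a' * g) = (r*a+θ) * g - (r*a+θ)/a' * g := by
          rw [← c1, ha']; ring
        rw [e]
        nlinarith)
    (by have := mul_le_mul_of_nonneg_right h5 gp.le
        rw [← ha', c1]; nlinarith)
    (by have := mul_le_mul_of_nonneg_right h6 gp.le
        rw [pR]; linarith)
  rw [show 4 * (((n-1-B:ℕ):ℝ) - A) = 2 * b by linarith, show 4 * (((n-1-B:ℕ):ℝ) - A') = 2 * b' by linarith,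
    ← ha', ← ha, c1, ← e1, show 1/2 - a * (r * g) = s * g by rw [e2, e1],
    show 1/2 - (r*a+θ)*g = (s-θ) * g by rw [sub_mul, e2, ← e1]; ring] at key
  have g3 : 0 < g^3 := by positivity
  have : (a*r^3 + 2*b - s^3) * g^3 ≤ ((r*a+θ)^3/a'^2 + 2*(b-θ)^3/b'^2 - (s-θ)^3) * g^3 := by
    have x1 : a' * ((r*a+θ)/a'*g)^3 = (r*a+θ)^3/a'^2 * g^3 := by field_simp
    have x2 : 2 * b' * ((b-θ)/b'*g)^3 = 2*(b-θ)^3/b'^2 * g^3 := by field_simp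
    rw [x1, x2] at key
    linarith
  exact le_of_mul_le_mul_right this g3

theorem Str.loc {n A B : ℕ} {c p : ℕ → ℝ} {h k g : ℝ} (S : Str n A B c p h k g)
    {a b r s q : ℝ} (ha : a = 2*A+1) (hb : b = 2*((n:ℝ)-1-A-B)) (hr : r = h/g) (hs : s = (1/2 - a*h)/g)
    (hq : q = (1/2 - (2*B+1)*k)/g) (b2 : 2 ≤ b) (r1 : 1 ≤ r) (s1 : s < 1) (q1 : q < 1) (rs : -r ≤ s) :
    s ≤ r/a + 2/b := by
  have ap : 1 ≤ a := by rw [ha]; have : (0:ℝ) ≤ A := by positivity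
                        linarith
  obtain ⟨ε, e0, e1, e2⟩ : ∃ ε, 0 < ε ∧ ε ≤ 1 - s ∧ ε ≤ 1 :=
    ⟨min (1-s) 1, lt_min (by linarith) one_pos, min_le_left _ _, min_le_right _ _⟩
  have bd : 0 < ε / b := by positivity
  have ad : ε / a ≤ ε := div_le_self e0.le ap
  have x1 : (b - -ε)/b = 1 + ε/b := by field_simp; ring
  have x2 : (r*a + -ε)/a = r - ε/a := by field_simp; ring
  have key := S.compare ha hb hr hs hq (A' := A) (a' := a) (b' := b) (θ := -ε) ha (by ring) S.lt
    (by nlinarith) (by linarith) (by rw [x2]; linarith) (by rw [x1]; linarith) (by rw [x1]; linarith)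
  have y1 : (r*a + -ε)^3/a^2 = a*r^3 - 3*r^2*ε + 3*ε^2*(r/a) - ε^3*(1/a)^2 := by field_simp; ring
  have y2 : 2*(b - -ε)^3/b^2 = 2*b + 6*ε + 3*ε^2*(2/b) + 2*ε^3*(1/b)^2 := by field_simp; ring
  rw [y1, y2] at key
  have rs2 : r^2 + s^2 = 2 := by
    have := S.eqL; have gp := S.gpos
    rw [hr, hs, ha]; field_simp; linarith
  have hb3 : (1/b)^2 ≤ 1/4 := by
    have h0 : 0 < 1/b := by positivity
    have : 1/b ≤ 1/2 := one_div_le_one_div_of_le (by norm_num) b2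
    nlinarith
  have ha3 : 0 ≤ (1/a)^2 := by positivity
  have : 0 ≤ 3 * ε^2 * (r/a + 2/b - s) := by
    have h3 : 0 < ε^3 := by positivity
    have e : r^2 = 2 - s^2 := by linarith
    rw [e] at key
    nlinarith
  have h4 : 0 < 3 * ε^2 := by positivity
  have := nonneg_of_mul_nonneg_right this h4
  linarith

structure Nrm (n A B : ℕ) (a e b r s t q : ℝ) : Prop where
  ha : a = 2*A+1
  he : e = 2*B+1
  hb : b = 2*((n:ℝ)-1-A-B)
  b2 : 2 ≤ b
  r1 : 1 ≤ r
  t1 : 1 ≤ t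
  rs : r^2 + s^2 = 2
  tq : t^2 + q^2 = 2
  s1 : s < 1
  q1 : q < 1
  s0 : -1 ≤ s
  q0 : -1 ≤ q
  eb : b = r*a + 2*s + q
  eb' : b = t*e + 2*q + s
  AB : A ≤ B + 1
  BA : B ≤ A + 1
  loc : s ≤ r/a + 2/b
  loc' : q ≤ t/e + 2/b
  Fp : 4 ≤ b → ∀ θ, 0 ≤ θ → θ ≤ 2 → θ - s ≤ (r*a+θ)/(a+2) → 
    4*(r^3-2) ≤ (2*r-θ)^2*(3*r-(2*r-θ)/(a+2))/(a+2)+2*(2-θ)^2*(3+(2-θ)/(b-2))/(b-2)-3*s*θ^2+θ^3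
  Fm : 1 ≤ A → ∀ θ, 0 ≤ θ → θ ≤ 2 → s + θ ≤ (b+θ)/(b+2) → q ≤ (b+θ)/(b+2) →
    4*(2-r^3) ≤ (2*r-θ)^2*(3*r+(2*r-θ)/(a-2))/(a-2)+2*(2-θ)^2*(3-(2-θ)/(b+2))/(b+2)-3*s*θ^2-θ^3

set_option maxHeartbeats 2000000 in
theorem Str.nrm {n A B : ℕ} {c p : ℕ → ℝ} {h k g : ℝ} (S : Str n A B c p h k g) {c' p' : ℕ → ℝ}
    (S' : Str n B A c' p' k h g) :
    ∃ a e b r s t q, Nrm n A B a e b r s t q ∧ s = (1/2 - a*h)/g := by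
  obtain ⟨a, ha⟩ : ∃ a : ℝ, a = 2*A+1 := ⟨_, rfl⟩
  obtain ⟨e, he⟩ : ∃ e : ℝ, e = 2*B+1 := ⟨_, rfl⟩
  obtain ⟨b, hb⟩ : ∃ b : ℝ, b = 2*((n:ℝ)-1-A-B) := ⟨_, rfl⟩
  obtain ⟨r, hr⟩ : ∃ r : ℝ, r = h/g := ⟨_, rfl⟩
  obtain ⟨s, hs⟩ : ∃ s : ℝ, s = (1/2 - a*h)/g := ⟨_, rfl⟩
  obtain ⟨t, ht⟩ : ∃ t : ℝ, t = k/g := ⟨_, rfl⟩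
  obtain ⟨q, hq⟩ : ∃ q : ℝ, q = (1/2 - e*k)/g := ⟨_, rfl⟩
  have gp := S.gpos
  have hp := S.hpos
  have kp := S.kpos
  have lt := S.lt
  have hn : (A:ℝ) + B + 1 + 1 ≤ n := by exact_mod_cast lt
  have b2 : 2 ≤ b := by linarith
  have b'eq : b = 2*((n:ℝ)-1-B-A) := by linarith
  have r0 : 0 < r := by rw [hr]; positivity
  have t0 : 0 < t := by rw [ht]; positivity
  have rs : r^2 + s^2 = 2 := by
    have := S.eqL
    rw [hr, hs, ha]; field_simp; linarith
  have tq : t^2 + q^2 = 2 := by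
    have := S.eqR
    rw [ht, hq, he]; field_simp; linarith
  have s1 : s < 1 := by rw [hs, div_lt_one gp, ha]; exact S.sL
  have q1 : q < 1 := by rw [hq, div_lt_one gp, he]; exact S.sR
  have sr : -r ≤ s := by
    rw [hs, hr, ← neg_div, div_le_div_iff_of_pos_right gp, ha]; have := S.sL'; linarith
  have qt : -t ≤ q := by
    rw [hq, ht, ← neg_div, div_le_div_iff_of_pos_right gp, he]; have := S.sR'; linarith
  have r1 : 1 ≤ r := by
    by_contra hc; push Not at hc; nlinarith
  have t1 : 1 ≤ t := by
    by_contra hc; push Not at hc; nlinarith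
  have s0 : -1 ≤ s := by nlinarith
  have q0 : -1 ≤ q := by nlinarith
  have tot := S.tot
  rw [← ha, ← he, ← hb] at tot
  have eb : b = r*a + 2*s + q := by
    rw [hr, hs, hq]; field_simp; linarith
  have eb' : b = t*e + 2*q + s := by
    rw [ht, hs, hq]; field_simp; linarith
  have a1 : 1 ≤ a := by rw [ha]; have : (0:ℝ) ≤ A := by positivity
                        linarith
  have hq' : q = (1/2 - (2*B+1)*k)/g := by rw [hq, he]
  have hs' : s = (1/2 - (2*A+1)*h)/g := by rw [hs, ha]
  refine ⟨a, e, b, r, s, t, q, ⟨ha, he, hb, b2, r1, t1, rs, tq, s1, q1, s0, q0, eb, eb', S.AB, S.BA,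
    S.loc ha hb hr hs hq' b2 r1 s1 q1 sr, S'.loc he b'eq ht hq hs' b2 t1 q1 s1 qt, ?_, ?_⟩, hs⟩
  · intro b4 θ h0 h2 hv
    have b4' : (4:ℝ) ≤ 2*((n:ℝ)-1-A-B) := by rw [← hb]; exact b4
    have hn4 : A + 1 + B + 1 < n := by
      have : ((A + 1 + B + 1 + 1 : ℕ):ℝ) ≤ n := by push_cast; linarith
      exact_mod_cast this
    have hbp : 0 < b - 2 := by linarith
    have gg : 1 ≤ (b-θ)/(b-2) := by rw [le_div_iff₀ hbp]; linarith
    have key := S.compare ha hb hr hs hq' (A' := A+1) (a' := a+2) (b' := b-2) (θ := θ)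
      (by rw [ha]; push_cast; ring) (by ring) hn4 (by positivity) (by linarith)
      (by linarith) (by linarith) (by linarith)
    have y1 : (r*a + θ)^3/(a+2)^2 = r^3*(a+2)-3*r^2*(2*r-θ) + (2*r-θ)^2*(3*r-(2*r-θ)/(a+2))/(a+2) := by
      field_simp; ring
    have y2 : 2*(b - θ)^3/(b-2)^2 = 2*(b-2)+6*(2-θ) + 2*(2-θ)^2*(3+(2-θ)/(b-2))/(b-2) := by
      field_simp; ring
    rw [y1, y2] at key
    have e1 : θ * s^2 = 2*θ - θ * r^2 := by
      have : s^2 = 2 - r^2 := by linarith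
      rw [this]; ring
    linarith
  · intro hA θ h0 h2 hv1 hv2
    have hAr : (1:ℝ) ≤ A := by exact_mod_cast hA
    have a3 : 3 ≤ a := by linarith
    have hap : 0 < a - 2 := by linarith
    have hbp : 0 < b + 2 := by linarith
    have hh : 1 ≤ (r*a-θ)/(a-2) := by rw [le_div_iff₀ hap]; nlinarith
    have key := S.compare ha hb hr hs hq' (A' := A-1) (a' := a-2) (b' := b+2) (θ := -θ)
      (by rw [ha, Nat.cast_sub hA]; push_cast; ring) (by ring) (by omega) (by nlinarith) (by linarith)
      (by rw [← sub_eq_add_neg]; linarith) (by rw [sub_neg_eq_add, sub_neg_eq_add]; linarith) (by rw [sub_neg_eq_add]; linarith)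
    have y1 : (r*a + -θ)^3/(a-2)^2 = r^3*(a-2)+3*r^2*(2*r-θ) + (2*r-θ)^2*(3*r+(2*r-θ)/(a-2))/(a-2) := by
      field_simp; ring
    have y2 : 2*(b - -θ)^3/(b+2)^2 = 2*(b+2)-6*(2-θ) + 2*(2-θ)^2*(3-(2-θ)/(b+2))/(b+2) := by
      field_simp; ring
    rw [y1, y2] at key
    have e1 : θ * s^2 = 2*θ - θ * r^2 := by
      have : s^2 = 2 - r^2 := by linarith
      rw [this]; ring
    linarith


theorem polyP {x : ℝ} (h0 : 0 ≤ x) (h1 : 15 * x ≤ 1) :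
    0 < 4*(117/10)*(1-2*x)*(12599/10000-725/100*x)^2
      - (24+12*(117/10*x)-12*(15873/10000+58/10*x)*(11*x)+3*(14143/10000)*(11*x)^2)*(12599/10000-725/100*x)^2
      - 2*(2-11*x)^2*(3*(12599/10000-725/100*x)+(2-11*x)*x)*(1-2*x)
      - 3*(684/1000-64/10*x)*121*x*(12599/10000-725/100*x)^2*(1-2*x)
      - 1331*x^2*(12599/10000-725/100*x)^2*(1-2*x) := by
  have hz : 0 ≤ 1 - 15*x := by linarith
  have H : ∀ i j : ℕ, 0 ≤ x^i*(1-15*x)^j := fun i j => by positivity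
  have e0 := H 0 5
  have e1 := H 1 4
  have e2 := H 2 3
  have e3 := H 3 2
  have e4 := H 4 1
  have e5 := H 5 0
  linarith

theorem polyM {x : ℝ} (h0 : 0 ≤ x) (h1 : 12 * x ≤ 1) {D r u ν : ℝ}
    (hν : ν = 27172/40000 + 5874/18000*(11*x))
    (hD : D = (12599/10000-2599/10000*(11*x))*(1-5*x) - 2*ν*x + x)
    (hr : r = 126/100 - 21/100*(11*x)-35/1000*(11*x)^2) (hu : u = 2*r-12*x) :
    0 < 44*(1-7*x)^2*D^2 - (3*r*u^2*(1-7*x)+u^3*x)*D^2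
      - (6*(2-12*x)^2*D-2*(2-12*x)^3*x)*(1-7*x)^2
      - 3*ν*144*x*(1-7*x)^2*D^2 + 1728*x^2*(1-7*x)^2*D^2 := by
  subst hu hr hD hν
  have hz : 0 ≤ 1 - 12*x := by linarith
  have H : ∀ i j : ℕ, 0 ≤ x^i*(1-12*x)^j := fun i j => by positivity
  have e0 := H 0 11
  have e1 := H 1 10
  have e2 := H 2 9
  have e3 := H 3 8
  have e4 := H 4 7
  have e5 := H 5 6
  have e6 := H 6 5
  have e7 := H 7 4
  have e8 := H 8 3
  have e9 := H 9 2
  have e10 := H 10 1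
  have e11 := H 11 0
  linarith


set_option maxHeartbeats 2000000 in
theorem claimP {a b r s : ℝ} (ha : 11 ≤ a) (r1 : 1 ≤ r) (rs : r^2 + s^2 = 2) (s0 : s ≤ 0)
    (hb : r*a + 2*s - 1 ≤ b)
    (Fp : 4 ≤ b → ∀ θ, 0 ≤ θ → θ ≤ 2 → θ - s ≤ (r*a+θ)/(a+2) → 
    4*(r^3-2) ≤ (2*r-θ)^2*(3*r-(2*r-θ)/(a+2))/(a+2)+2*(2-θ)^2*(3+(2-θ)/(b-2))/(b-2)-3*s*θ^2+θ^3) :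
    r^3 ≤ 2 + 117/10/(a+4) := by
  by_contra hc
  push Not at hc
  obtain ⟨x, hx⟩ : ∃ x, x = 1/(a+4) := ⟨_, rfl⟩
  have hx0 : 0 < x := by rw [hx]; positivity
  have hax : a * x = 1 - 4*x := by rw [hx]; field_simp; ring
  have hx1 : 15 * x ≤ 1 := by nlinarith
  obtain ⟨w, hw⟩ : ∃ w, w = r^3 - 2 := ⟨_, rfl⟩
  have hwx : 117/10*x ≤ w := by
    rw [hw, hx]; have : 117/10*(1/(a+4)) = 117/10/(a+4) := by ring
    rw [this]; linarith
  have hrU : r ≤ 1.4143 := by nlinarith [sq_nonneg s]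
  have hrL : 1.2599 ≤ r := by
    by_contra h; push Not at h
    have : r^3 < 1.2599^3 := by gcongr
    norm_num at this
    linarith
  have hp : 0 ≤ (r - 1.2599)*(1.4143-r) := mul_nonneg (by linarith) (by linarith)
  have b1 : 1.5873 + 0.498*w ≤ r^2 := by
    rw [hw]; nlinarith [mul_nonneg hp (by linarith : 0 ≤ r)]
  have b2 : 1.2599 + 0.186*w ≤ r := by
    rw [hw]; nlinarith [mul_nonneg hp (by linarith : 0 ≤ r)]
  have b1' : 15873/10000 + 58/10*x ≤ r^2 := by linarith
  have b3 : -s ≤ 684/1000 - 64/10*x := by nlinarith [sq_nonneg (-s-0.45)]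
  obtain ⟨D, hD⟩ : ∃ D, D = 12599/10000-725/100*x := ⟨_, rfl⟩
  have hDp : 0 < D := by rw [hD]; linarith
  have hbD : D ≤ (b-2)*x := by
    have h1 : (r*a+2*s-1-2)*x ≤ (b-2)*x := by gcongr
    have h2 : (r*a+2*s-1-2)*x = r*(1-4*x)+2*s*x-3*x := by rw [← hax]; ring
    have h3 : (12599/10000+217/100*x)*(1-4*x) ≤ r*(1-4*x) := by
      apply mul_le_mul_of_nonneg_right <;> linarith
    have h4 : -s*x ≤ (684/1000 - 64/10*x)*x := by gcongr
    rw [hD]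
    nlinarith
  have hb2 : 0 < b - 2 := by
    by_contra h; push Not at h
    nlinarith
  have hb4 : 4 ≤ b := by nlinarith
  obtain ⟨θ, hθ⟩ : ∃ θ, θ = 11*x := ⟨_, rfl⟩
  have hθ0 : 0 ≤ θ := by linarith
  have hval : θ - s ≤ (r*a+θ)/(a+2) := by
    rw [le_div_iff₀ (by linarith)]
    have : θ - s ≤ 1 := by linarith
    nlinarith
  have F := Fp hb4 θ (by linarith) (by linarith) hval
  obtain ⟨i, hi⟩ : ∃ i, i = 1/(a+2) := ⟨_, rfl⟩
  obtain ⟨q, hq⟩ : ∃ q, q = 1/(b-2) := ⟨_, rfl⟩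
  have hip : 0 < i := by rw [hi]; positivity
  have hqp : 0 < q := by rw [hq]; positivity
  have hix : i = x/(1-2*x) := by
    rw [hi, div_eq_div_iff (by linarith) (by linarith)]; linarith
  have hi13 : 13 * i ≤ 1 := by
    rw [hi, mul_one_div, div_le_one (by linarith)]; linarith
  have hqx : q ≤ x/D := by
    rw [hq, div_le_div_iff₀ hb2 hDp]; linarith
  have f1 : (2*r-θ)^2*(3*r-(2*r-θ)/(a+2))/(a+2) ≤ (24+12*w-12*r^2*θ+3*r*θ^2)*i := by
    have e1 : (2*r-θ)^2*(3*r-(2*r-θ)/(a+2))/(a+2) = (2*r-θ)^2*(3*r)*i - (2*r-θ)^3*i^2 := by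
      rw [hi]; field_simp
    have e2 : 0 ≤ (2*r-θ)^3*i^2 := by
      have : 0 ≤ 2*r-θ := by linarith
      positivity
    have e3 : (24+12*w-12*r^2*θ+3*r*θ^2)*i = (2*r-θ)^2*(3*r)*i := by rw [hw]; ring
    linarith
  have f2 : 2*(2-θ)^2*(3+(2-θ)/(b-2))/(b-2) ≤ 2*(2-θ)^2*(3+(2-θ)*(x/D))*(x/D) := by
    have e1 : 2*(2-θ)^2*(3+(2-θ)/(b-2))/(b-2) = 2*(2-θ)^2*(3+(2-θ)*q)*q := by rw [hq]; field_simp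
    rw [e1]
    have : 0 ≤ 2 - θ := by linarith
    gcongr
  have f3 : (24+12*w-12*r^2*θ+3*r*θ^2)*i - 4*w
      ≤ (24+12*(117/10*x)-12*(15873/10000+58/10*x)*(11*x)+3*(14143/10000)*(11*x)^2)*i - 4*(117/10)*x := by
    have g1 : 0 ≤ (w - 117/10*x)*(4-12*i) := mul_nonneg (by linarith) (by linarith)
    have g2 : -12*r^2*θ+3*r*θ^2 ≤ -12*(15873/10000+58/10*x)*(11*x)+3*(14143/10000)*(11*x)^2 := by
      rw [← hθ]
      have : (15873/10000 + 58/10*x)*θ ≤ r^2*θ := by gcongr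
      have : r*θ^2 ≤ (14143/10000)*θ^2 := by gcongr; linarith
      linarith
    have g3 := mul_le_mul_of_nonneg_right g2 hip.le
    linarith
  have f4 : -3*s*θ^2 ≤ 3*(684/1000-64/10*x)*(11*x)^2 := by
    rw [← hθ]
    have : -s*θ^2 ≤ (684/1000 - 64/10*x)*θ^2 := by gcongr
    linarith
  have key := polyP hx0.le hx1
  rw [← hD] at key
  have hx2 : 0 < 1 - 2*x := by linarith
  have fin : 0 < 4*(117/10)*x - (24+12*(117/10*x)-12*(15873/10000+58/10*x)*(11*x)+3*(14143/10000)*(11*x)^2)*i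
      - 2*(2-θ)^2*(3+(2-θ)*(x/D))*(x/D) - 3*(684/1000-64/10*x)*(11*x)^2 - θ^3 := by
    have := mul_pos key (by positivity : 0 < x/((1-2*x)*D^2))
    refine lt_of_lt_of_eq this ?_
    rw [hix, hθ]
    field_simp
    ring
  rw [← hw] at F
  linarith



set_option maxHeartbeats 2000000 in
theorem claimM {a b r s q : ℝ} (ha : 7 ≤ a) (r1 : 1 ≤ r) (rs : r^2 + s^2 = 2) (s0 : s ≤ 0) (s1 : -1 ≤ s)
    (hb : r*a + 2*s - 1 ≤ b) (hbp : 2 ≤ b) (hq : q ≤ b/(b+2))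
    (Fm : ∀ θ, 0 ≤ θ → θ ≤ 2 → s + θ ≤ (b+θ)/(b+2) → q ≤ (b+θ)/(b+2) →
    4*(2-r^3) ≤ (2*r-θ)^2*(3*r+(2*r-θ)/(a-2))/(a-2)+2*(2-θ)^2*(3-(2-θ)/(b+2))/(b+2)-3*s*θ^2-θ^3) :
    2 - 11/(a+5) ≤ r^3 := by
  by_contra hc
  push Not at hc
  obtain ⟨x, hx⟩ : ∃ x, x = 1/(a+5) := ⟨_, rfl⟩
  have hx0 : 0 < x := by rw [hx]; positivity
  have hax : a * x = 1 - 5*x := by rw [hx]; field_simp; ring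
  have hx1 : 12 * x ≤ 1 := by nlinarith
  obtain ⟨w, hw⟩ : ∃ w, w = 2 - r^3 := ⟨_, rfl⟩
  have hwx : 11*x ≤ w := by
    rw [hw, hx]; have : 11*(1/(a+5)) = 11/(a+5) := by ring
    rw [this]; linarith
  have hw1 : w ≤ 1 := by rw [hw]; have : 1 ≤ r^3 := one_le_pow₀ r1
                         linarith
  obtain ⟨e, he⟩ : ∃ e, e = w - 11*x := ⟨_, rfl⟩
  have he0 : 0 ≤ e := by linarith
  have hrU : r ≤ 1.26 := by
    by_contra h; push Not at h
    have : 1.26^3 < r^3 := by gcongr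
    norm_num at this
    linarith
  have hp : 0 ≤ (r - 1)*(1.26-r) := mul_nonneg (by linarith) (by linarith)
  have b1 : 1.5873 - 0.5874*w ≤ r^2 := by
    rw [hw]; nlinarith [mul_nonneg hp (by linarith : 0 ≤ r)]
  have b2 : 1.2599 - 0.2599*w ≤ r := by
    rw [hw]; nlinarith [mul_nonneg hp (by linarith : 0 ≤ r)]
  have b2' : r ≤ 1.26 - 0.21*w - 0.035*w^2 := by
    by_contra h; push Not at h
    have h1 : 0 ≤ 1.26 - 0.21*w - 0.035*w^2 := by nlinarith
    have h2 : (1.26 - 0.21*w - 0.035*w^2)^3 < r^3 := by gcongr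
    have hw0 : 0 ≤ w := by linarith
    have hw2 : 0 ≤ 1 - w := by linarith
    have h3 : 2 - w ≤ (1.26 - 0.21*w - 0.035*w^2)^3 := by
      have H : ∀ i j : ℕ, 0 ≤ w^i*(1-w)^j := fun i j => by positivity
      nlinarith [H 0 6, H 1 5, H 2 4, H 3 3, H 4 2, H 5 1, H 6 0]
    linarith
  have b3 : -s ≤ 27172/40000 + 5874/18000*w := by
    clear * - rs b1
    nlinarith [sq_nonneg (-s-0.9)]
  obtain ⟨ν, hν⟩ : ∃ ν, ν = 27172/40000 + 5874/18000*(11*x) := ⟨_, rfl⟩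
  have b3' : -s ≤ ν + 5874/18000*e := by rw [hν, he]; linarith
  obtain ⟨D, hD⟩ : ∃ D, D = (12599/10000-2599/10000*(11*x))*(1-5*x) - 2*ν*x + x := ⟨_, rfl⟩
  have hbD : D - 0.26*e ≤ (b+2)*x := by
    have h1 : (r*a+2*s-1+2)*x ≤ (b+2)*x := by gcongr
    have h2 : (r*a+2*s-1+2)*x = r*(1-5*x)+2*s*x+x := by rw [← hax]; ring
    have h3 : (12599/10000-2599/10000*w)*(1-5*x) ≤ r*(1-5*x) := by
      apply mul_le_mul_of_nonneg_right <;> linarith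
    have h4 : -s*x ≤ (ν + 5874/18000*e)*x := by gcongr
    have h5 : w = 11*x + e := by rw [he]; ring
    rw [h5] at h3
    rw [hD]
    have : 0 ≤ e * x := by positivity
    linarith
  have hDe : 0.49 ≤ D - 0.26*e := by
    rw [hD, hν]
    have h1 : e ≤ 1 - 11*x := by linarith
    have h2 := sq_nonneg (12*x-1)
    linarith
  have hDp : 0.49 ≤ D := by linarith
  obtain ⟨θ, hθ⟩ : ∃ θ, θ = 12*x := ⟨_, rfl⟩
  have hθ0 : 0 ≤ θ := by linarith
  have hval : s + θ ≤ (b+θ)/(b+2) := by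
    rw [le_div_iff₀ (by linarith)]
    have h5 : 0.5 ≤ -s := by clear * - rs hrU r1 s0; nlinarith
    have h6 : s + θ ≤ 0.5 := by linarith
    have h7 := mul_le_mul_of_nonneg_right h6 (by linarith : 0 ≤ b + 2)
    linarith
  have hval2 : q ≤ (b+θ)/(b+2) := by
    refine hq.trans ?_
    gcongr; linarith
  have F := Fm θ (by linarith) (by linarith) hval hval2
  obtain ⟨i, hi⟩ : ∃ i, i = 1/(a-2) := ⟨_, rfl⟩
  obtain ⟨k, hk⟩ : ∃ k, k = 1/(b+2) := ⟨_, rfl⟩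
  have ha2 : 0 < a - 2 := by linarith
  have hip : 0 < i := by rw [hi]; positivity
  have hkp : 0 < k := by rw [hk]; positivity
  have hx7 : 0 < 1 - 7*x := by linarith
  have hix : i = x/(1-7*x) := by
    rw [hi, div_eq_div_iff (by linarith) (by linarith)]; linarith
  have hD0 : 0 < D := by linarith
  have hkx : k ≤ x/D + 1.1*x*e := by
    have h1 : k ≤ x/(D-0.26*e) := by
      rw [hk, div_le_div_iff₀ (by linarith) (by linarith)]; linarith
    refine h1.trans ?_
    rw [div_le_iff₀ (by linarith)]
    have : (x/D + 1.1*x*e)*(D-0.26*e) = x + x*e*(1.1*(D-0.26*e) - 0.26/D) := by field_simp; ring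
    rw [this]
    have h2 : 0.26/D ≤ 1.1*(D-0.26*e) := by
      rw [div_le_iff₀ hD0]
      have := mul_le_mul hDe hDp (by norm_num) (by linarith)
      linarith
    have : 0 ≤ x*e*(1.1*(D-0.26*e) - 0.26/D) := mul_nonneg (by positivity) (by linarith)
    linarith
  have hk4 : 4 * k ≤ 1 := by
    rw [hk, mul_one_div, div_le_one (by linarith)]; linarith
  obtain ⟨r0, hr0⟩ : ∃ r0, r0 = 126/100 - 21/100*(11*x)-35/1000*(11*x)^2 := ⟨_, rfl⟩
  obtain ⟨u, hu⟩ : ∃ u, u = 2*r0-12*x := ⟨_, rfl⟩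
  have hrr : r ≤ r0 := by
    have h1 : (11*x)^2 ≤ w^2 := pow_le_pow_left₀ (by linarith) hwx 2
    rw [hr0]; linarith
  have f1 : (2*r-θ)^2*(3*r+(2*r-θ)/(a-2))/(a-2) ≤ 3*r0*u^2*i+u^3*i^2 := by
    have e1 : (2*r-θ)^2*(3*r+(2*r-θ)/(a-2))/(a-2) = 3*r*(2*r-θ)^2*i + (2*r-θ)^3*i^2 := by
      rw [hi]; field_simp
    rw [e1]
    have h0 : 0 ≤ 2*r-θ := by linarith
    have h1 : 2*r-θ ≤ u := by linarith
    have h2 : 0 ≤ 3*r0 := by linarith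
    gcongr
  have hxD : x/D ≤ 0.2 := by rw [div_le_iff₀ hD0]; linarith
  have f2 : 2*(2-θ)^2*(3-(2-θ)/(b+2))/(b+2) ≤ 2*(2-θ)^2*(3-(2-θ)*(x/D))*(x/D) + 0.8*e := by
    have e1 : 2*(2-θ)^2*(3-(2-θ)/(b+2))/(b+2) = 2*(2-θ)^2*((3-(2-θ)*k)*k) := by rw [hk]; field_simp
    rw [e1]
    have h0 : 0 ≤ 2 - θ := by linarith
    have hxe : 0 ≤ 1.1*x*e := by positivity
    have h1 : (3-(2-θ)*k)*k ≤ (3-(2-θ)*(x/D))*(x/D) + 3.3*x*e := by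
      rcases le_total k (x/D) with h | h
      · have : 0 ≤ (x/D - k)*(3 - (2-θ)*(x/D+k)) := mul_nonneg (by linarith) (by
          have : (2-θ)*(x/D+k) ≤ 2*(x/D+k) := mul_le_mul_of_nonneg_right (by linarith) (by positivity)
          linarith)
        linarith
      · have : 0 ≤ (k - x/D)*((2-θ)*(x/D+k)) := mul_nonneg (by linarith) (by positivity)
        linarith
    have h2 := mul_le_mul_of_nonneg_left h1 (by positivity : 0 ≤ 2*(2-θ)^2)
    have h3 : 2*(2-θ)^2*(3.3*x*e) ≤ 0.8*e := by
      have : 2*(2-θ)^2*(3.3*x) ≤ 0.8 := by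
        rw [hθ]
        clear * - hx0 hx1
        nlinarith [mul_nonneg (mul_nonneg hx0.le (by linarith : 0 ≤ 1-12*x)) hx0.le, sq_nonneg (18*x-1)]
      have := mul_le_mul_of_nonneg_right this he0
      linarith
    linarith
  have f4 : -3*s*θ^2 ≤ 3*ν*(12*x)^2 + e := by
    rw [← hθ]
    have h1 : -s*θ^2 ≤ (ν + 5874/18000*e)*θ^2 := by gcongr
    have h2 : θ^2 ≤ 1 := pow_le_one₀ hθ0 (by linarith)
    have h3 : e*θ^2 ≤ e := mul_le_of_le_one_right he0 h2
    linarith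
  have key := polyM hx0.le hx1 hν hD hr0 hu
  have fin : 0 < 44*x - (3*r0*u^2*i+u^3*i^2)
      - 2*(2-θ)^2*(3-(2-θ)*(x/D))*(x/D) - 3*ν*(12*x)^2 + θ^3 := by
    have := mul_pos key (by positivity : 0 < x/((1-7*x)^2*D^2))
    refine lt_of_lt_of_eq this ?_
    rw [hix, hθ]
    have hx7' := hx7.ne'
    have hD0' := hD0.ne'
    clear * - hx7' hD0'
    field_simp
    ring
  rw [← hw] at F
  have : 4*w = 44*x + 4*e := by rw [he]; ring
  linarith


theorem core_small {a ρ ω r s r' s' z : ℝ} (ha : 0 ≤ a) (rs : r^2+s^2=2) (s0 : s ≤ 0)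
    (rs' : r'^2+s'^2=2) (s0' : s' ≤ 0) (r1' : 1 ≤ r')
    (star : r'*(a+4)+2*s' ≤ r*a+2*s) (hz : z ≤ r'^3) (hρ : 0 ≤ ρ) (hρz : ρ^3 ≤ z) (hω : 0 ≤ ω)
    (hω2 : 2 - ρ^2 ≤ ω^2) (fin : 1.41422*a < ρ*(a+4) - 2*ω) : False := by
  have h1 : ρ ≤ r' := by
    by_contra h; push Not at h
    have : r'^3 < ρ^3 := by gcongr
    linarith
  have h2 : r ≤ 1.41422 := by nlinarith [sq_nonneg s]
  have h3 : ρ^2 ≤ r'^2 := by gcongr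
  have h4 : -s' ≤ ω := by
    apply le_of_sq_le_sq _ hω
    nlinarith
  have h5 : r*a ≤ 1.41422*a := by gcongr
  have h6 : ρ*(a+4) ≤ r'*(a+4) := by gcongr
  linarith

theorem core_big {a y z R N R' N' : ℝ} (ha : 11 ≤ a) (hy : y*(a+4) = 117/10) (hz : z*(a+9) = 11)
    (hR : 0 ≤ R) (hN : 0 ≤ N) (hR' : 0 ≤ R') (hN' : 0 ≤ N')
    (R3 : R^3 = 2 + y) (R3' : R'^3 = 2 - z) (RN : R^2+N^2 = 2) (RN' : R'^2+N'^2=2)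
    (star : R'*(a+4) - 2*N' ≤ R*a - 2*N) : False := by
  have y0 : 0 < y := by
    by_contra h; push Not at h
    nlinarith
  have z0 : 0 < z := by
    by_contra h; push Not at h
    nlinarith
  have y1 : y ≤ 0.78 := by nlinarith
  have z1 : z ≤ 0.55 := by nlinarith
  have zy : 0.705*y ≤ z := by
    have e1 : y = 117/10/(a+4) := by field_simp; linarith
    have e2 : z = 11/(a+9) := by field_simp; linarith
    rw [e1, e2, mul_div_assoc', div_le_div_iff₀ (by linarith) (by linarith)]
    linarith
  have Rl : 1.2599 ≤ R := by
    by_contra h; push Not at h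
    have : R^3 < 1.2599^3 := by gcongr
    norm_num at this; linarith
  have Ru : R ≤ 1.4062 := by
    by_contra h; push Not at h
    have : 1.4062^3 < R^3 := by gcongr
    norm_num at this; linarith
  have Rl' : 1.1318 ≤ R' := by
    by_contra h; push Not at h
    have : R'^3 < 1.1318^3 := by gcongr
    norm_num at this; linarith
  have Ru' : R' ≤ 1.26 := by
    by_contra h; push Not at h
    have : 1.26^3 < R'^3 := by gcongr
    norm_num at this; linarith
  have Ry : R ≤ 1.2747 + 0.1687*y := by
    have : y = R^3 - 2 := by linarith
    rw [this]
    have h := mul_nonneg (sq_nonneg (R - 1.4061)) (by linarith : 0 ≤ R + 2*1.4061)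
    nlinarith
  have Rz : R' ≤ 1.2751 - 0.26*z := by
    have : z = 2 - R'^3 := by linarith
    rw [this]
    have h := mul_nonneg (sq_nonneg (R' - 1.1319)) (by linarith : 0 ≤ R' + 2*1.1319)
    nlinarith
  have Nl : 0.642 - 3.366*(R-1.26) ≤ N := by
    apply le_of_sq_le_sq _ hN
    have h := mul_nonneg (by linarith : 0 ≤ R - 1.2599) (by linarith : 0 ≤ 1.4062 - R)
    nlinarith
  have Nl' : 0.642 + 1.606*(1.26-R') ≤ N' := by
    apply le_of_sq_le_sq _ hN'
    have h := mul_nonneg (by linarith : 0 ≤ R' - 1.1318) (by linarith : 0 ≤ 1.26 - R')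
    nlinarith
  have kap : R + R' ≤ 2.6*(N+N') := by linarith
  have Nd : N' - N ≤ 2.6*(R-R') := by
    by_contra h; push Not at h
    have h1 : (N'-N)*(N'+N) = (R-R')*(R+R') := by linarith
    have h0 : 0 ≤ R - R' := by
      by_contra h'; push Not at h'
      have h'' : R < R' := by linarith
      have : R^3 < R'^3 := by gcongr
      linarith
    have h2 : (R-R')*(R+R') ≤ (R-R')*(2.6*(N+N')) := by gcongr
    have h3 : 2.6*(R-R')*(N'+N) < (N'-N)*(N'+N) := by
      apply mul_lt_mul_of_pos_right h; linarith
    linarith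
  have h1 : R'*(a+9.2) ≤ R*(a+5.2) := by linarith
  have h2 : (R'*(a+9.2))^3 ≤ (R*(a+5.2))^3 := by gcongr
  rw [mul_pow, mul_pow, R3, R3'] at h2
  have h3 := mul_le_mul_of_nonneg_right h2 (by positivity : 0 ≤ (a+9)*(a+4))
  have e1 : (2-z)*(a+9.2)^3*((a+9)*(a+4)) = (2*(a+9)-11)*(a+4)*(a+9.2)^3 := by rw [← hz]; ring
  have e2 : (2+y)*(a+5.2)^3*((a+9)*(a+4)) = (2*(a+4)+117/10)*(a+9)*(a+5.2)^3 := by rw [← hy]; ring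
  rw [e1, e2] at h3
  obtain ⟨u, rfl⟩ : ∃ u, a = 11 + u := ⟨a - 11, by ring⟩
  have hu : 0 ≤ u := by linarith
  clear * - h3 hu
  have u2 := pow_nonneg hu 2
  have u3 := pow_nonneg hu 3
  have u4 := pow_nonneg hu 4
  nlinarith

theorem cbrt (v : ℝ) (hv : 0 ≤ v) : ∃ c : ℝ, 0 ≤ c ∧ c^3 = v :=
  ⟨v^((3:ℕ):ℝ)⁻¹, by positivity, Real.rpow_inv_natCast_pow hv (by norm_num)⟩

theorem core_large {a r s r' s' : ℝ} (ha : 11 ≤ a) (r1 : 1 ≤ r) (rs : r^2+s^2=2) (s0 : s ≤ 0)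
    (rs' : r'^2+s'^2=2) (s0' : s' ≤ 0) (r1' : 1 ≤ r')
    (star : r'*(a+4)+2*s' ≤ r*a+2*s) (hr : r^3 ≤ 2 + 117/10/(a+4)) (hr' : 2 - 11/(a+9) ≤ r'^3) : False := by
  obtain ⟨y, hy⟩ : ∃ y, y = 117/10/(a+4) := ⟨_, rfl⟩
  obtain ⟨z, hz⟩ : ∃ z, z = 11/(a+9) := ⟨_, rfl⟩
  have y0 : 0 < y := by rw [hy]; positivity
  have hy' : y*(a+4) = 117/10 := by rw [hy]; field_simp
  have hz' : z*(a+9) = 11 := by rw [hz]; field_simp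
  have y1 : y ≤ 0.78 := by nlinarith
  have z1 : z ≤ 0.55 := by nlinarith
  have z0 : 0 < z := by rw [hz]; positivity
  obtain ⟨R, hR, R3⟩ := cbrt (2+y) (by linarith)
  obtain ⟨R', hR', R3'⟩ := cbrt (2-z) (by linarith)
  have h1 : r ≤ R := by
    by_contra h; push Not at h
    have : R^3 < r^3 := by gcongr
    linarith
  have h2 : R' ≤ r' := by
    by_contra h; push Not at h
    have : r'^3 < R'^3 := by gcongr
    linarith
  have Ru : R ≤ 1.4062 := by
    by_contra h; push Not at h
    have : 1.4062^3 < R^3 := by gcongr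
    norm_num at this; linarith
  have RR' : R' ≤ R := by
    by_contra h; push Not at h
    have : R^3 < R'^3 := by gcongr
    linarith
  have R2 : 0 ≤ 2 - R^2 := by
    have : R^2 ≤ 1.4062^2 := by gcongr
    norm_num at this; linarith
  have R2' : 0 ≤ 2 - R'^2 := by
    have : R'^2 ≤ R^2 := by gcongr
    linarith
  refine core_big ha hy' hz' hR (Real.sqrt_nonneg (2-R^2)) hR' (Real.sqrt_nonneg (2-R'^2)) R3 R3'
    (by rw [Real.sq_sqrt R2]; ring) (by rw [Real.sq_sqrt R2']; ring) ?_
  have h3 : √(2-R^2) ≤ -s := by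
    rw [Real.sqrt_le_iff]; constructor
    · linarith
    · have : r^2 ≤ R^2 := by gcongr
      linarith
  have h4 : -s' ≤ √(2-R'^2) := by
    apply Real.le_sqrt_of_sq_le
    have : R'^2 ≤ r'^2 := by gcongr
    linarith
  have h5 : r*a ≤ R*a := by gcongr
  have h6 : R'*(a+4) ≤ r'*(a+4) := by gcongr
  linarith


theorem half_bd {a b r s q w : ℝ} (w0 : 1.414 ≤ w) (hw : w^2 = 2) (ha : 1 ≤ a) (r1 : 1 ≤ r)
    (rs : r^2+s^2=2) (s0 : 0 ≤ s) (q0 : -1 ≤ q) (b2 : 2 ≤ b) (eb : b = r*a+2*s+q)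
    (loc : s ≤ r/a+2/b) : w*a ≤ r*a+2*s := by
  have hab : 2*a ≤ 3*b := by
    have : 1*a ≤ r*a := by gcongr
    linarith
  have h1 : s*a ≤ r+3 := by
    have h2 : s*a ≤ (r/a+2/b)*a := by gcongr
    have h3 : (r/a+2/b)*a = r + 2*a/b := by field_simp
    have h4 : 2*a/b ≤ 3 := by rw [div_le_iff₀ (by linarith)]; linarith
    linarith
  have h2 : (w-r)*(w+r) = s^2 := by linarith
  have h3 : s*(s*a) ≤ s*(2*(w+r)) := by
    apply mul_le_mul_of_nonneg_left _ s0; linarith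
  have h4 : ((w-r)*a)*(w+r) ≤ (2*s)*(w+r) := by
    calc _ = s*(s*a) := by linear_combination a*h2
      _ ≤ _ := by linarith
  have := le_of_mul_le_mul_right h4 (by linarith)
  linarith

theorem le_w {r s w : ℝ} (w0 : 0 ≤ w) (hw : w^2 = 2) (rs : r^2+s^2=2) : r ≤ w := by
  apply le_of_sq_le_sq _ w0
  nlinarith [sq_nonneg s]

theorem w_exists : ∃ w : ℝ, w^2 = 2 ∧ 1.414 ≤ w ∧ w ≤ 1.4143 := by
  refine ⟨√2, Real.sq_sqrt (by norm_num), ?_, ?_⟩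
  · apply Real.le_sqrt_of_sq_le; norm_num
  · rw [Real.sqrt_le_iff]; norm_num

theorem Nrm.a1 {n A B : ℕ} {a e b r s t q : ℝ} (N : Nrm n A B a e b r s t q) : 1 ≤ a := by
  rw [N.ha]; have : (0:ℝ) ≤ A := by positivity
  linarith

theorem Nrm.e1 {n A B : ℕ} {a e b r s t q : ℝ} (N : Nrm n A B a e b r s t q) : 1 ≤ e := by
  rw [N.he]; have : (0:ℝ) ≤ B := by positivity
  linarith

theorem excl_pp {n A B A' B' : ℕ} {a e b r s t q a' e' b' r' s' t' q' : ℝ}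
    (N : Nrm n A B a e b r s t q) (N' : Nrm (n+2) A' B' a' e' b' r' s' t' q')
    (hA : A' = A + 2) (hB : B ≤ B') (hs : 0 ≤ s) (hs' : 0 ≤ s') : False := by
  obtain ⟨w, hw, w0, w1⟩ := w_exists
  have H := half_bd w0 hw N'.a1 N'.r1 N'.rs hs' N'.q0 N'.b2 N'.eb N'.loc
  have hB' : (B:ℝ) ≤ B' := by exact_mod_cast hB
  have ha' : a' = a + 4 := by rw [N'.ha, N.ha, hA]; push_cast; ring
  have hbb : b' ≤ b := by rw [N'.hb, N.hb, hA]; push_cast; linarith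
  have h1 : r*a ≤ w*a := mul_le_mul_of_nonneg_right (le_w (by linarith) hw N.rs) (by linarith [N.a1])
  have := N.eb; have := N'.eb; have := N.q1; have := N'.q0; have := N.s1
  have h2 : w*a' = w*a + 4*w := by rw [ha']; ring
  linarith

theorem excl_np {n A B A' B' : ℕ} {a e b r s t q a' e' b' r' s' t' q' : ℝ}
    (N : Nrm n A B a e b r s t q) (N' : Nrm (n+2) A' B' a' e' b' r' s' t' q')
    (hA : A' = A + 1) (hB : B ≤ B') (hs : s < 0) (hs' : 0 ≤ s') : False := by
  obtain ⟨w, hw, w0, w1⟩ := w_exists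
  have H := half_bd w0 hw N'.a1 N'.r1 N'.rs hs' N'.q0 N'.b2 N'.eb N'.loc
  have ha' : a' = a + 2 := by rw [N'.ha, N.ha, hA]; push_cast; ring
  have h1 : r*a ≤ w*a := mul_le_mul_of_nonneg_right (le_w (by linarith) hw N.rs) (by linarith [N.a1])
  have e1 := N.eb; have e1' := N'.eb; have q1 := N.q1; have q0' := N'.q0; have s1' := N'.s1
  have e2 := N.eb'; have e2' := N'.eb'
  have h2 : w*a' = w*a + 2*w := by rw [ha']; ring
  rcases eq_or_lt_of_le hB with hd | hd
  · have hbb : b' = b + 2 := by rw [N'.hb, N.hb, hA, hd]; push_cast; ring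
    have he : e' = e := by rw [N'.he, N.he, hd]
    rw [he] at e2'
    rcases le_or_gt q 0 with hq | hq
    · have h3 : t' < t := by
        have h4 : t'^2 < t^2 := by
          have := N.tq; have := N'.tq
          have : (-q)^2 < (-q')^2 := pow_lt_pow_left₀ (by linarith) (by linarith) (by norm_num)
          linarith
        exact lt_of_pow_lt_pow_left₀ 2 (by linarith [N.t1]) h4
      have h5 : t'*e ≤ t*e := mul_le_mul_of_nonneg_right h3.le (by linarith [N.e1])
      linarith
    · have H2 := half_bd w0 hw N.e1 N.t1 N.tq hq.le N.s0 N.b2 N.eb' N.loc'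
      have h5 : t'*e ≤ w*e := mul_le_mul_of_nonneg_right (le_w (by linarith) hw N'.tq) (by linarith [N.e1])
      linarith
  · have hB' : (B:ℝ) + 1 ≤ B' := by exact_mod_cast hd
    have hbb : b' ≤ b := by rw [N'.hb, N.hb, hA]; push_cast; linarith
    linarith

theorem excl_nn {n A B A' B' : ℕ} {a e b r s t q a' e' b' r' s' t' q' : ℝ}
    (N : Nrm n A B a e b r s t q) (N' : Nrm (n+2) A' B' a' e' b' r' s' t' q')
    (hA1 : 1 ≤ A) (hA : A' = A + 2) (hB : B ≤ B') (hs : s < 0) (hs' : s' < 0) : False := by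
  obtain ⟨w, hw, w0, w1⟩ := w_exists
  have ha' : a' = a + 4 := by rw [N'.ha, N.ha, hA]; push_cast; ring
  have ha3 : 3 ≤ a := by
    rw [N.ha]; have : (1:ℝ) ≤ A := by exact_mod_cast hA1
    linarith
  have h1 : r*a ≤ w*a := mul_le_mul_of_nonneg_right (le_w (by linarith) hw N.rs) (by linarith [N.a1])
  have e1 := N.eb; have e1' := N'.eb; have q1 := N.q1; have q0' := N'.q0; have s1' := N'.s1
  have e2 := N.eb'; have e2' := N'.eb'; have q0 := N.q0; have q1' := N'.q1; have s0' := N'.s0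
  have r1 := N.r1; have r1' := N'.r1
  have star : r'*(a+4)+2*s' ≤ r*a+2*s := by
    rcases eq_or_lt_of_le hB with hd | hd
    · have hbb : b' = b := by rw [N'.hb, N.hb, hA, hd]; push_cast; ring
      have hBA : B = A + 1 := by have := N'.AB; have := N.BA; omega
      have he : e = a + 2 := by rw [N.he, N.ha, hBA]; push_cast; ring
      have he' : e' = e := by rw [N'.he, N.he, hd]
      rw [he'] at e2'
      rcases lt_or_ge 0 q with hq | hq
      · have H2 := half_bd w0 hw N.e1 N.t1 N.tq hq.le N.s0 N.b2 N.eb' N.loc'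
        have : w*e = w*a+2*w := by rw [he]; ring
        linarith
      · rcases le_or_gt q q' with hqq | hqq
        · rw [ha'] at e1'; linarith
        · exfalso
          have h3 : t' < t := by
            have h4 : t'^2 < t^2 := by
              have := N.tq; have := N'.tq
              have : (-q)^2 < (-q')^2 := pow_lt_pow_left₀ (by linarith) (by linarith) (by norm_num)
              linarith
            exact lt_of_pow_lt_pow_left₀ 2 (by linarith [N.t1]) h4
          have h5 : t'*e ≤ t*e := mul_le_mul_of_nonneg_right h3.le (by linarith [N.e1])
          have h6 : s < s' := by linarith
          have h7 : r < r' := by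
            have h4 : r^2 < r'^2 := by
              have := N.rs; have := N'.rs
              have : (-s')^2 < (-s)^2 := pow_lt_pow_left₀ (by linarith) (by linarith) (by norm_num)
              linarith
            exact lt_of_pow_lt_pow_left₀ 2 (by linarith [N'.r1]) h4
          have h8 : r*a ≤ r'*a := mul_le_mul_of_nonneg_right h7.le (by linarith)
          rw [ha'] at e1'
          linarith
    · have hB' : (B:ℝ) + 1 ≤ B' := by exact_mod_cast hd
      have hbb : b' ≤ b - 2 := by rw [N'.hb, N.hb, hA]; push_cast; linarith
      rw [ha'] at e1'
      linarith
  have hq' : q' ≤ b'/(b'+2) := by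
    have b2' := N'.b2
    rcases le_total q' 0 with h | h
    · exact h.trans (by positivity)
    · have hr : 1*a' ≤ r'*a' := mul_le_mul_of_nonneg_right r1' (by linarith)
      have hb5 : 5 ≤ b' := by linarith
      have he5 : 5 ≤ e' := by
        have : (A':ℝ) ≤ B' + 1 := by exact_mod_cast N'.AB
        have := N'.ha; have := N'.he
        linarith
      have ht : t' ≤ 1.4143 := (le_w (by linarith) hw N'.tq).trans w1
      have := N'.t1
      have h2 : t'/e' ≤ 1.4143/5 := by gcongr
      have h3 : 2/b' ≤ 2/5 := by gcongr
      have h4 := N'.loc'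
      rw [le_div_iff₀ (by linarith)]
      have h5 : q' ≤ 0.7 := by norm_num at h2 h3 ⊢; linarith
      have h6 : q'*(b'+2) ≤ 0.7*(b'+2) := by gcongr
      linarith
  have CM := claimM (a := a') (b := b') (r := r') (s := s') (q := q') (by linarith) r1' N'.rs hs'.le s0'
    (by linarith) N'.b2 hq' (N'.Fm (by omega))
  have e9 : a' + 5 = a + 9 := by linarith
  rw [e9] at CM
  rcases le_or_gt 11 a with h11 | h11
  · have CP := claimP h11 r1 N.rs hs.le (by linarith) N.Fp
    exact core_large h11 r1 N.rs hs.le N'.rs hs'.le r1' star CP CM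
  · have hA5 : A < 5 := by
      have := N.ha
      have : (A:ℝ) < 5 := by linarith
      exact_mod_cast this
    have hac := N.ha
    interval_cases A
    · have hh : a = 3 := by rw [hac]; norm_num
      subst hh
      exact core_small (ρ := 1.027) (ω := 0.9723) (by norm_num) N.rs hs.le N'.rs hs'.le r1' star CM
        (by norm_num) (by norm_num) (by norm_num) (by norm_num) (by norm_num)
    · have hh : a = 5 := by rw [hac]; norm_num
      subst hh
      exact core_small (ρ := 1.0668) (ω := 0.9285) (by norm_num) N.rs hs.le N'.rs hs'.le r1' star CM
        (by norm_num) (by norm_num) (by norm_num) (by norm_num) (by norm_num)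
    · have hh : a = 7 := by rw [hac]; norm_num
      subst hh
      exact core_small (ρ := 1.0948) (ω := 0.8953) (by norm_num) N.rs hs.le N'.rs hs'.le r1' star CM
        (by norm_num) (by norm_num) (by norm_num) (by norm_num) (by norm_num)
    · have hh : a = 9 := by rw [hac]; norm_num
      subst hh
      exact core_small (ρ := 1.1157) (ω := 0.8691) (by norm_num) N.rs hs.le N'.rs hs'.le r1' star CM
        (by norm_num) (by norm_num) (by norm_num) (by norm_num) (by norm_num)



theorem Str.cA1 {n A B : ℕ} {c p : ℕ → ℝ} {h k g : ℝ} (S : Str n A B c p h k g) : 1/2 < c (A+1) := by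
  have h1 := S.sh.cm (A+1) (by omega) (by have := S.lt; omega)
  rw [h1]; push_cast
  have := S.sL
  linarith

theorem Str.range {n A B A' B' : ℕ} {c p c' p' : ℕ → ℝ} {h k g h' k' g' : ℝ}
    (S : Str n A B c p h k g) (S' : Str (n+2) A' B' c' p' h' k' g') : A ≤ A' ∧ A' ≤ A + 2 := by
  have l := S.lt
  have l' := S'.lt
  constructor
  · by_contra hh
    have h1 := interlace_two S.opt S'.opt (i := A) (by omega)
    have h2 := S'.opt.1.mono (i := A'+1) (j := A) (by omega) (by omega)
    have h3 := S'.cA1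
    have h4 := S.sh.hA
    linarith
  · by_contra hh
    have h1 := interlace_two' S.opt S'.opt (i := A+1) (by omega)
    have h2 := S'.opt.1.mono (i := A+1+2) (j := A') (by omega) (by omega)
    have h3 := S.cA1
    have h4 := S'.sh.hA
    linarith

theorem Str.count {n A B : ℕ} {c p : ℕ → ℝ} {h k g a s : ℝ} (S : Str n A B c p h k g)
    (ha : a = 2*A+1) (hs : s = (1/2 - a*h)/g) {i : ℕ} (hi : i < n) :
    p i ≤ 1/2 ↔ i < if 0 ≤ s then A + 1 else A := by
  have l := S.lt
  have gp := S.gpos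
  have h1 : i < A → p i ≤ 1/2 := by
    intro hiA
    have := (S.opt.mem hi).2
    have := S.opt.1.mono (i := i+1) (j := A) hiA (by omega)
    have := S.sh.hA
    linarith
  have h2 : A < i → ¬ p i ≤ 1/2 := by
    intro hiA
    have := (S.opt.mem hi).1
    have := S.opt.1.mono (i := A+1) (j := i) hiA (by omega)
    have := S.cA1
    push Not
    linarith
  have h3 : p A ≤ 1/2 ↔ 0 ≤ s := by
    rw [S.sh.pl A le_rfl, hs, le_div_iff₀ gp, ha]
    constructor <;> intro <;> linarith
  rcases lt_trichotomy i A with hA | hA | hA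
  · simp only [h1 hA, true_iff]; split_ifs <;> omega
  · subst hA; rw [h3]; split_ifs with h <;> simp [h]
  · simp only [h2 hA, false_iff]; split_ifs <;> omega

theorem mid_count {H n : ℕ} {c p : ℕ → ℝ} (h : Opt n c p) (hn : n = H + H) (hH : 1 ≤ H) {i : ℕ} (hi : i < n) :
    (p i < 3/4 ↔ i < H) ∧ p i ≠ 3/4 := by
  have h1 := interlace_same_p h h.refl (i := H-1) (by omega)
  have h2 := interlace_same_p h.refl h (i := H-1) (by omega)
  simp only [show H - 1 + 1 = H by omega, show n - 1 - H = H - 1 by omega,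
    show n - 1 - (H - 1) = H by omega] at h1 h2
  rcases lt_or_ge i H with hl | hl
  · have : p i ≤ p (H-1) := by
      rcases eq_or_lt_of_le (show i ≤ H-1 by omega) with e | e
      · rw [e]
      · exact (h.p_lt e (by omega)).le
    have : p i < 3/4 := by linarith
    exact ⟨⟨fun _ => hl, fun _ => this⟩, this.ne⟩
  · have : p H ≤ p i := by
      rcases eq_or_lt_of_le hl with e | e
      · rw [e]
      · exact (h.p_lt e hi).le
    have : 3/4 < p i := by linarith
    exact ⟨⟨fun h => absurd h (by linarith), fun h => absurd h (by omega)⟩, this.ne'⟩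

theorem card_facts {H K n : ℕ} {c p : ℕ → ℝ} {α : Set ℝ} (h : Opt n c p) (hn : n = H + H) (hH : 1 ≤ H)
    (hα : α = p '' Iio n) (hK : K < n) (hc : ∀ i < n, p i ≤ 1/2 ↔ i < K) :
    (α ∩ Icc (0:ℝ) (1/2)).ncard = K ∧ (α ∩ Ioo (1/2:ℝ) (3/4)).ncard = H - K ∧ K ≤ H := by
  have inj : InjOn p (Iio n) := by
    intro i hi j hj hij
    rcases lt_trichotomy i j with e | e | e
    · exact absurd hij (h.p_lt e hj).ne
    · exact e
    · exact absurd hij (h.p_lt e hi).ne'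
  have hKH : K ≤ H := by
    by_contra hh; push Not at hh
    have h1 := (hc H (by omega)).2 hh
    have h2 := (mid_count h hn hH (i := H) (by omega)).1.1 (by linarith)
    omega
  refine ⟨?_, ?_, hKH⟩
  · have e : α ∩ Icc (0:ℝ) (1/2) = p '' (Finset.range K : Set ℕ) := by
      ext x
      rw [hα]
      constructor
      · rintro ⟨⟨i, hi, rfl⟩, h0, h1⟩
        exact ⟨i, by simpa using (hc i hi).1 h1, rfl⟩
      · rintro ⟨i, hi, rfl⟩
        have hi : i < K := by simpa using hi
        have hin : i < n := by omega
        exact ⟨⟨i, hin, rfl⟩, by have := (h.mem hin).1; have := h.1.nonneg hin.le; linarith, (hc i hin).2 hi⟩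
    rw [e, ncard_image_of_injOn (inj.mono _), ncard_coe_finset, Finset.card_range]
    intro i hi
    have hi : i < K := by simpa using hi
    exact hi.trans hK
  · have e : α ∩ Ioo (1/2:ℝ) (3/4) = p '' (Finset.Ico K H : Set ℕ) := by
      ext x
      rw [hα]
      constructor
      · rintro ⟨⟨i, hi, rfl⟩, h0, h1⟩
        refine ⟨i, ?_, rfl⟩
        have h2 := (mid_count h hn hH hi).1.1 h1
        have h3 : ¬ i < K := fun hh => by have := (hc i hi).2 hh; linarith
        simp; omega
      · rintro ⟨i, hi, rfl⟩
        have hi : K ≤ i ∧ i < H := by simpa using hi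
        have hin : i < n := by omega
        refine ⟨⟨i, hin, rfl⟩, ?_, (mid_count h hn hH hin).1.2 hi.2⟩
        by_contra hh; push Not at hh
        have := (hc i hin).1 hh
        omega
    rw [e, ncard_image_of_injOn (inj.mono _), ncard_coe_finset, Nat.card_Ico]
    intro i hi
    have hi : K ≤ i ∧ i < H := by simpa using hi
    show i < n
    omega

theorem stmt_11 (n : ℕ) (hn : 4 ≤ n) (hne : Even n)
    (α : Set ℝ) (hα : IsOptimal P2 n α)
    (k m : ℕ) (hk : 0 < k) (hm : 0 < m)
    (hkc : (α ∩ Icc (0 : ℝ) (1 / 2)).ncard = k)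
    (hmc : (α ∩ Ioo (1 / 2 : ℝ) (3 / 4)).ncard = m) :
    ∀ β : Set ℝ, IsOptimal P2 (n + 2) β →
      ((β ∩ Icc (0 : ℝ) (1 / 2)).ncard = k + 1 ∧
        (β ∩ Ioo (1 / 2 : ℝ) (3 / 4)).ncard = m) ∨
      ((β ∩ Icc (0 : ℝ) (1 / 2)).ncard = k ∧
        (β ∩ Ioo (1 / 2 : ℝ) (3 / 4)).ncard = m + 1) := by
  intro β hβ
  obtain ⟨H, hH⟩ := hne
  obtain ⟨c, p, O, eα⟩ := exists_opt (by omega) hα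
  obtain ⟨c', p', O', eβ⟩ := exists_opt (by omega) hβ
  obtain ⟨A, B, h, l, g, S, T⟩ := exists_str hn O
  obtain ⟨A', B', h', l', g', S', T'⟩ := exists_str (by omega) O'
  obtain ⟨a, e, b, r, s, t, q, N, hs⟩ := S.nrm T
  obtain ⟨a', e', b', r', s', t', q', N', hs'⟩ := S'.nrm T'
  have RA := S.range S'
  have RB := T.range T'
  have C := fun i (hi : i < n) => S.count N.ha hs hi
  have C' := fun i (hi : i < n + 2) => S'.count N'.ha hs' hi
  obtain ⟨K, hK⟩ : ∃ K, K = if 0 ≤ s then A + 1 else A := ⟨_, rfl⟩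
  obtain ⟨K', hK'⟩ : ∃ K', K' = if 0 ≤ s' then A' + 1 else A' := ⟨_, rfl⟩
  rw [← hK] at C
  rw [← hK'] at C'
  have lt := S.lt
  have lt' := S'.lt
  have hKn : K < n := by rw [hK]; split_ifs <;> omega
  have hKn' : K' < n + 2 := by rw [hK']; split_ifs <;> omega
  obtain ⟨f1, f2, f3⟩ := card_facts O hH (by omega) eα hKn C
  obtain ⟨f1', f2', f3'⟩ := card_facts (H := H+1) O' (by omega) (by omega) eβ hKn' C'
  have i1 : K ≤ K' := by
    by_contra hh
    have h1 := interlace_two_p O O' (i := K') (by omega)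
    have h2 := (C K' (by omega)).2 (by omega)
    have h3 := (C' K' (by omega)).1 (by linarith)
    omega
  have i2 : K' ≤ K + 2 := by
    by_contra hh
    have h1 := interlace_two_p' O O' (i := K) (by omega)
    have h2 := (C' (K+2) (by omega)).2 (by omega)
    have h3 := (C K (by omega)).1 (by linarith)
    omega
  have i3 : K' ≠ K + 2 := by
    intro hh
    rw [hK, hK'] at hh
    split_ifs at hh with g1 g2 g2
    · exact excl_pp N N' (by omega) RB.1 g2 g1
    · exact excl_np N N' (by omega) RB.1 (by linarith) g1
    · omega
    · have : K = A := by rw [hK, if_neg g2]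
      exact excl_nn N N' (by omega) (by omega) RB.1 (by linarith) (by linarith)
  omega
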